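/- Let X_i, i ∈ I, be pairwise disjoint σ-scattered linear orders. If the sequence ⟨[X_i]_⇄ : i ∈ I⟩ of bi-embeddability classes is finite-to-one, i.e. there is no infinite J ⊆ I such that X_i ⇄ X_j for all i, j ∈ J, then the disjoint union ⋃_{i∈I} X_i is a reversible poset. -/

import Mathlib

universe u v w

section Defs

variable {α : Type*} {β : Type*}

/-- `f` is a homomorphism from `⟨α, r⟩` to `⟨β, s⟩`. -/
def IsHom (r : α → α → Prop) (s : β → β → Prop) (f : α → β) : Prop :=
  ∀ x y, r x y → s (f x) (f y)

/-- A condensation is a bijective homomorphism. -/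
def IsCond (r : α → α → Prop) (s : β → β → Prop) (f : α → β) : Prop :=
  Function.Bijective f ∧ IsHom r s f

/-- A monomorphism is an injective homomorphism. -/
def IsMono (r : α → α → Prop) (s : β → β → Prop) (f : α → β) : Prop :=
  Function.Injective f ∧ IsHom r s f

/-- An isomorphism of binary structures. -/
def IsIso (r : α → α → Prop) (s : β → β → Prop) (f : α → β) : Prop :=
  Function.Bijective f ∧ ∀ x y, r x y ↔ s (f x) (f y)

/-- A binary structure is reversible iff every self-condensation is an automorphism. -/
def Reversible (r : α → α → Prop) : Prop :=
  ∀ f : α → α, IsCond r r f → IsIso r r f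

/-- A binary structure is connected iff it has exactly one component: it is nonempty and
the least equivalence relation containing `r` relates any two points. -/
def Connected (r : α → α → Prop) : Prop :=
  Nonempty α ∧ ∀ x y, Relation.EqvGen r x y

/-- The relation of the disjoint union of the structures `⟨X i, R i⟩`. -/
def unionRel {I : Type*} {X : I → Type*} (R : ∀ i, X i → X i → Prop) :
    (Σ i, X i) → (Σ i, X i) → Prop :=
  fun a b => ∃ h : a.1 = b.1, R b.1 (h ▸ a.2) b.2

end Defs

/-- An embedding between binary structures (for linear orders regarded as structures
`⟨L, <⟩`, an injective map with `x < y ↔ f x < f y`). -/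
def EmbedsIn {α β : Type*} (r : α → α → Prop) (s : β → β → Prop) : Prop :=
  ∃ f : α → β, Function.Injective f ∧ ∀ x y, r x y ↔ s (f x) (f y)

/-- A linearly ordered set `⟨L, r⟩` is scattered iff the rationals do not embed into it. -/
def Scattered (L : Type*) (r : L → L → Prop) : Prop :=
  ¬ EmbedsIn ((· < ·) : ℚ → ℚ → Prop) r

/-- `⟨L, r⟩` is σ-scattered iff it is the union of at most countably many scattered
suborders. -/
def SigmaScattered (L : Type*) (r : L → L → Prop) : Prop :=
  ∃ S : ℕ → Set L, (⋃ n, S n) = Set.univ ∧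
    ∀ n, Scattered (S n) (fun a b => r a.1 b.1)

/-!
The core is Laver's theorem that σ-scattered linear orders are well-quasi-ordered by embeddability.
Call a suborder constructible if it arises from points by iterating binary sums, sums over regular
cardinals in which every summand embeds into cofinally many others, duals of such sums, and
shuffles, which are sums over σ-scattered orders all of whose summands embed into arbitrarily small
pieces of the sum. A sum embeds into another one of the same kind as soon as its parameters are at
most those of the other and each of its summands embeds into a summand of the other. Hence every bad
array of constructible orders is strictly refined by a bad array of summands, contradicting
Nash-Williams' minimal bad array lemma: constructible orders are well-quasi-ordered. This in turn
shows that the convex sets all of whose convex parts are constructible are closed under sums along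
well-orders and their duals. If a σ-scattered order were not such a set, collapsing the maximal
convex sets of this kind would leave a dense quotient, and between two suitable points of that
quotient the order is a shuffle.

A condensation `f` of the disjoint union maps components into components and induces a surjection
`g` of the index set with `X i` embeddable in `X (g i)`. If `g` were not injective, some index would
have an infinite backward orbit of distinct indices, which descends for embeddability; by the
well-quasi-ordering it contains infinitely many pairwise bi-embeddable components. So `g` is a
permutation, and `f` is an isomorphism because the components are linear orders.
-/

open Set Filter Order

section InfiniteSubsets

/-- The infinite subsets of `A`. -/
def infSubsets (A : Set ℕ) : Set (Set ℕ) := {X | X ⊆ A ∧ X.Infinite}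

/-- The set `X` without its least element; this is the shift on infinite sets of naturals. -/
def dropMin (X : Set ℕ) : Set ℕ := X \ {sInf X}

/-- `X` and `Y` have the same elements below `m`. -/
def Agree (m : ℕ) (X Y : Set ℕ) : Prop := ∀ i < m, i ∈ X ↔ i ∈ Y

/-- The finite set `t` is an initial segment of `X`. -/
def InitSeg (t : Finset ℕ) (X : Set ℕ) : Prop :=
  ↑t ⊆ X ∧ ∀ x ∈ X, x ∉ t → ∀ i ∈ t, i < x

/-- `U` is open as a family of infinite subsets of `A`, in the topology of pointwise convergence. -/
def OpenOn (A : Set ℕ) (U : Set ℕ → Prop) : Prop :=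
  ∀ X ∈ infSubsets A, U X → ∃ m, ∀ Y ∈ infSubsets A, Agree m X Y → U Y

/-- `f` is locally constant on the space of infinite subsets of `A`. -/
def LocConst {Q : Type*} (A : Set ℕ) (f : Set ℕ → Q) : Prop :=
  ∀ X ∈ infSubsets A, ∃ m, ∀ Y ∈ infSubsets A, Agree m X Y → f Y = f X

variable {A B X Y Z : Set ℕ} {m n : ℕ} {t : Finset ℕ}

theorem self_mem_infSubsets (hA : A.Infinite) : A ∈ infSubsets A := ⟨subset_rfl, hA⟩

theorem infSubsets_mono (h : B ⊆ A) : infSubsets B ⊆ infSubsets A := fun _ hX =>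
  ⟨hX.1.trans h, hX.2⟩

theorem dropMin_subset (X : Set ℕ) : dropMin X ⊆ X := sdiff_subset

theorem dropMin_mem_infSubsets (h : X ∈ infSubsets A) : dropMin X ∈ infSubsets A :=
  ⟨(dropMin_subset X).trans h.1, h.2.sdiff (finite_singleton _)⟩

namespace Agree

theorem symm (h : Agree m X Y) : Agree m Y X := fun i hi => (h i hi).symm

theorem trans (h : Agree m X Y) (h' : Agree m Y Z) : Agree m X Z :=
  fun i hi => (h i hi).trans (h' i hi)

theorem mono (h : Agree n X Y) (hmn : m ≤ n) : Agree m X Y := fun i hi => h i (hi.trans_le hmn)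

theorem sInf_eq (h : Agree m X Y) (hX : X.Nonempty) (hm : sInf X < m) : sInf Y = sInf X := by
  have hY : sInf X ∈ Y := (h _ hm).1 (Nat.sInf_mem hX)
  refine le_antisymm (Nat.sInf_le hY) (Nat.sInf_le ?_)
  exact (h _ ((Nat.sInf_le hY).trans_lt hm)).2 (Nat.sInf_mem ⟨_, hY⟩)

theorem dropMin (h : Agree m X Y) (hX : X.Nonempty) (hm : sInf X < m) :
    Agree m (dropMin X) (dropMin Y) := fun i hi => by
  simp only [_root_.dropMin, Set.mem_sdiff, h.sInf_eq hX hm, h i hi]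

theorem subset_of_subset (hXY : Agree m X Y) (hY : Y ⊆ A ∩ Iio m ∪ B)
    (hX : X ⊆ B) : Y ⊆ B := fun y hy => (hY hy).elim (fun h => hX ((hXY y h.2).2 hy)) id

end Agree

namespace InitSeg

theorem empty (X : Set ℕ) : InitSeg ∅ X := ⟨by simp, by simp⟩

theorem mem_of_mem (hX : InitSeg t X) (hY : InitSeg t Y) {i : ℕ} (hi : i < t.card) (hiX : i ∈ X) :
    i ∈ Y := by
  by_cases hit : i ∈ t
  · exact hY.1 hit
  · have hsub : t ⊆ Finset.range i := fun j hj => Finset.mem_range.2 (hX.2 i hiX hit j hj)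
    have hcard := Finset.card_le_card hsub
    rw [Finset.card_range] at hcard
    omega

theorem agree (hX : InitSeg t X) (hY : InitSeg t Y) : Agree t.card X Y :=
  fun _ hi => ⟨hX.mem_of_mem hY hi, hY.mem_of_mem hX hi⟩

theorem of_agree (ht : InitSeg t X) (h : Agree (t.sup id + 1) X Y) : InitSeg t Y := by
  have hlt : ∀ i ∈ t, i < t.sup id + 1 := fun i hi => Nat.lt_succ_of_le (Finset.le_sup (f := id) hi)
  refine ⟨fun i hi => (h i (hlt i hi)).1 (ht.1 hi), fun x hx hxt i hi => ?_⟩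
  by_contra! hle
  have hxX : x ∈ X := (h x (hle.trans_lt (hlt i hi))).2 hx
  exact (ht.2 x hxX hxt i hi).not_ge hle

theorem exists_insert (h : InitSeg t X) (hX : X.Infinite) :
    ∃ n ∈ X, (∀ i ∈ t, i < n) ∧ InitSeg (insert n t) X := by
  have hmem := Nat.sInf_mem (hX.sdiff t.finite_toSet).nonempty
  refine ⟨_, hmem.1, h.2 _ hmem.1 hmem.2, ?_, ?_⟩
  · rw [Finset.coe_insert]
    exact insert_subset hmem.1 h.1
  · intro x hx hxt i hi
    rw [Finset.mem_insert, not_or] at hxt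
    rcases Finset.mem_insert.1 hi with rfl | hi
    · exact lt_of_le_of_ne (Nat.sInf_le ⟨hx, hxt.2⟩) (Ne.symm hxt.1)
    · exact h.2 x hx hxt.2 i hi

theorem exists_le_card {P : Finset ℕ → Prop} (h : InitSeg t X) (hX : X.Infinite) (ht : P t)
    (hP : ∀ t', t ⊆ t' → ↑t' ⊆ X → P t' → ∀ n ∈ X, (∀ i ∈ t', i < n) → P (insert n t')) (k : ℕ) :
    ∃ t', t ⊆ t' ∧ InitSeg t' X ∧ k ≤ t'.card ∧ P t' := by
  induction k with
  | zero => exact ⟨t, subset_rfl, h, Nat.zero_le _, ht⟩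
  | succ k ih =>
    obtain ⟨t', htt', hin, hk, hPt'⟩ := ih
    obtain ⟨n, hnX, hn, hn'⟩ := hin.exists_insert hX
    refine ⟨insert n t', htt'.trans (Finset.subset_insert _ _), hn', ?_,
      hP t' htt' hin.1 hPt' n hnX hn⟩
    rw [Finset.card_insert_of_notMem fun h => lt_irrefl _ (hn n h)]
    omega

end InitSeg

namespace LocConst

variable {Q R : Type*} {f : Set ℕ → Q} {g : Set ℕ → R}

theorem mono (h : LocConst A f) (hBA : B ⊆ A) : LocConst B f := fun X hX =>
  let ⟨m, hm⟩ := h X (infSubsets_mono hBA hX)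
  ⟨m, fun Y hY => hm Y (infSubsets_mono hBA hY)⟩

theorem comp_dropMin (h : LocConst A f) : LocConst A (fun X => f (dropMin X)) := by
  intro X hX
  obtain ⟨m, hm⟩ := h _ (dropMin_mem_infSubsets hX)
  refine ⟨max m (sInf X + 1), fun Y hY hXY => hm _ (dropMin_mem_infSubsets hY) ?_⟩
  exact (hXY.dropMin hX.2.nonempty (by omega)).mono (le_max_left _ _)

theorem prodMk (hf : LocConst A f) (hg : LocConst A g) : LocConst A (fun X => (f X, g X)) := by
  intro X hX
  obtain ⟨m, hm⟩ := hf X hX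
  obtain ⟨n, hn⟩ := hg X hX
  exact ⟨max m n, fun Y hY hXY => Prod.ext (hm Y hY (hXY.mono (le_max_left _ _)))
    (hn Y hY (hXY.mono (le_max_right _ _)))⟩

theorem comp (hf : LocConst A f) (g : Q → R) : LocConst A (fun X => g (f X)) := fun X hX =>
  let ⟨m, hm⟩ := hf X hX
  ⟨m, fun Y hY h => congrArg g (hm Y hY h)⟩

theorem openOn {U : Set ℕ → Prop} (hU : LocConst A U) : OpenOn A U := fun X hX hUX =>
  let ⟨m, hm⟩ := hU X hX
  ⟨m, fun Y hY h => (hm Y hY h) ▸ hUX⟩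

open scoped Classical in
theorem ite_subset {f g : Set ℕ → Q} (hBA : B ⊆ A)
    (hg : LocConst B g) (hf : LocConst A f) (m : ℕ) :
    LocConst (A ∩ Iio m ∪ B) (fun X => if X ⊆ B then g X else f X) := by
  intro X hX
  have hPA : A ∩ Iio m ∪ B ⊆ A := union_subset inter_subset_left hBA
  by_cases hXB : X ⊆ B
  · obtain ⟨n, hn⟩ := hg X ⟨hXB, hX.2⟩
    refine ⟨max n m, fun Y hY hXY => ?_⟩
    have hYB := (hXY.mono (le_max_right _ _)).subset_of_subset hY.1 hXB
    simp only [if_pos hXB, if_pos hYB]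
    exact hn Y ⟨hYB, hY.2⟩ (hXY.mono (le_max_left _ _))
  · obtain ⟨n, hn⟩ := hf X (infSubsets_mono hPA hX)
    refine ⟨max n m, fun Y hY hXY => ?_⟩
    have hYB : ¬ Y ⊆ B := fun h =>
      hXB ((hXY.mono (le_max_right _ _)).symm.subset_of_subset hX.1 h)
    simp only [if_neg hXB, if_neg hYB]
    exact hn Y (infSubsets_mono hPA hY) (hXY.mono (le_max_left _ _))

end LocConst

end InfiniteSubsets

section Ramsey

variable {𝒰 : Ultrafilter ℕ} {A B X : Set ℕ} {S S' : Finset ℕ → Set ℕ} {t t' : Finset ℕ}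
  {U : Set ℕ → Prop}

/-- The set `X` obeys the strategy `S` above `t`: each finite subset `t'` of `X` that contains `t`
is continued in `X` only by elements of `S t'`. -/
def Follows (S : Finset ℕ → Set ℕ) (t : Finset ℕ) (X : Set ℕ) : Prop :=
  ∀ t' : Finset ℕ, t ⊆ t' → ↑t' ⊆ X → ∀ n ∈ X, (∀ i ∈ t', i < n) → n ∈ S t'

theorem Follows.mono (h : Follows S t B) (htt' : t ⊆ t') (hX : X ⊆ B)
    (hS : ∀ s, t' ⊆ s → S s ⊆ S' s) : Follows S' t' X :=
  fun s hs hsX n hn hlt => hS s hs (h s (htt'.trans hs) (hsX.trans hX) n (hX hn) hlt)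

theorem exists_follows (h𝒰 : (𝒰 : Filter ℕ) ≤ cofinite) (hA : A ∈ 𝒰) (hS : ∀ t, S t ∈ 𝒰) :
    ∃ B ∈ infSubsets A, Follows S ∅ B := by
  let G : ℕ → Set ℕ := fun m => ⋂ t ∈ (Finset.range (m + 1)).powerset, S t
  have hG : ∀ m, Ioi m ∩ G m ∈ (𝒰 : Filter ℕ) := fun m =>
    inter_mem (h𝒰 (by rw [mem_cofinite, compl_Ioi]; exact finite_Iic m))
      ((biInter_finset_mem _).2 fun t _ => hS t)
  obtain ⟨f, hf, hr⟩ := exists_seq_of_forall_finset_exists (fun n => n ∈ A ∩ S ∅)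
    (fun m n => n ∈ Ioi m ∩ G m) fun s _ => by
      obtain ⟨y, hy, hyG⟩ := 𝒰.neBot.nonempty_of_mem
        (inter_mem (inter_mem hA (hS ∅)) ((biInter_finset_mem s).2 fun m _ => hG m))
      exact ⟨y, hy, mem_iInter₂.1 hyG⟩
  have hmono : StrictMono f := fun a b hab => (hr a b hab).1
  refine ⟨range f, ⟨?_, infinite_range_of_injective hmono.injective⟩, ?_⟩
  · rintro _ ⟨k, rfl⟩
    exact (hf k).1
  · rintro t - ht _ ⟨k, rfl⟩ hlt
    rcases t.eq_empty_or_nonempty with rfl | hne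
    · exact (hf k).2
    · obtain ⟨j, hj⟩ := ht (t.max'_mem hne)
      have hjk : j < k := hmono.lt_iff_lt.1 (hj ▸ hlt _ (t.max'_mem hne))
      refine mem_iInter₂.1 (hr j k hjk).2 t (Finset.mem_powerset.2 fun i hi => ?_)
      rw [Finset.mem_range, hj]
      exact Nat.lt_succ_of_le (t.le_max' i hi)

/-- The finite set `t` is a winning position for membership in `U`: by well-founded recursion,
`𝒰`-almost all one-point extensions of `t` win, and a position wins outright when all infinite
subsets of `A` starting with it lie in `U`. -/
inductive Wins (𝒰 : Ultrafilter ℕ) (A : Set ℕ) (U : Set ℕ → Prop) : Finset ℕ → Prop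
  | base {t : Finset ℕ} : (∀ X ∈ infSubsets A, InitSeg t X → U X) → Wins 𝒰 A U t
  | step {t : Finset ℕ} {s : Set ℕ} : s ∈ 𝒰 → (∀ n ∈ s, Wins 𝒰 A U (insert n t)) → Wins 𝒰 A U t

theorem Wins.exists_strategy (h : Wins 𝒰 A U t) :
    ∃ S : Finset ℕ → Set ℕ, (∀ t', S t' ∈ 𝒰) ∧
      ∀ X ∈ infSubsets A, InitSeg t X → Follows S t X → U X := by
  classical
  induction h with
  | base h => exact ⟨fun _ => univ, fun _ => univ_mem, fun X hX ht _ => h X hX ht⟩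
  | @step t s hs _ ih =>
    choose! S hS hwin using ih
    refine ⟨fun t' => s ∩ ⋂ n ∈ t'.filter (· ∈ s), S n t', fun t' => inter_mem hs
      ((biInter_finset_mem _).2 fun n hn => hS n (Finset.mem_filter.1 hn).2 t'), ?_⟩
    intro X hX ht hfol
    obtain ⟨n, hnX, hlt, hn⟩ := ht.exists_insert hX.2
    have hns : n ∈ s := (hfol t subset_rfl ht.1 n hnX hlt).1
    refine hwin n hns X hX hn (hfol.mono (Finset.subset_insert _ _) subset_rfl fun t' ht' => ?_)
    exact inter_subset_right.trans
      (biInter_subset_of_mem (Finset.mem_filter.2 ⟨ht' (Finset.mem_insert_self _ _), hns⟩))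

theorem setOf_not_wins_insert_mem (h : ¬ Wins 𝒰 A U t) : {n | ¬ Wins 𝒰 A U (insert n t)} ∈ 𝒰 := by
  by_contra hcon
  refine h (.step (Ultrafilter.compl_mem_iff_notMem.2 hcon) fun n hn => ?_)
  simpa using hn

theorem exists_strategy_of_not_wins (hU : OpenOn A U) (h : ¬ Wins 𝒰 A U t) :
    ∃ S : Finset ℕ → Set ℕ, (∀ t', S t' ∈ 𝒰) ∧
      ∀ X ∈ infSubsets A, InitSeg t X → Follows S t X → ¬ U X := by
  refine ⟨fun t' => {n | ¬ Wins 𝒰 A U t' → ¬ Wins 𝒰 A U (insert n t')}, fun t' => ?_, ?_⟩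
  · by_cases ht' : Wins 𝒰 A U t'
    · exact mem_of_superset univ_mem fun n _ hn => absurd ht' hn
    · exact mem_of_superset (setOf_not_wins_insert_mem ht') fun n hn _ => hn
  · intro X hX ht hfol hUX
    obtain ⟨m, hm⟩ := hU X hX hUX
    obtain ⟨t', -, ht', hcard, hlose⟩ := ht.exists_le_card hX.2 h
      (fun t' htt' ht'X hlose n hn hlt => hfol t' htt' ht'X n hn hlt hlose) m
    exact hlose (.base fun Y hY hYt => hm Y hY ((ht'.agree hYt).mono hcard))

theorem OpenOn.exists_deciding_strategy (hU : OpenOn A U) (𝒰 : Ultrafilter ℕ) :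
    ∃ S : Finset ℕ → Set ℕ, (∀ t, S t ∈ 𝒰) ∧ ∀ B ⊆ A, ∀ t, Follows S t B →
      (∀ X ∈ infSubsets B, InitSeg t X → U X) ∨ (∀ X ∈ infSubsets B, InitSeg t X → ¬ U X) := by
  have hdec : ∀ t, ∃ S : Finset ℕ → Set ℕ, (∀ t', S t' ∈ 𝒰) ∧
      ((∀ X ∈ infSubsets A, InitSeg t X → Follows S t X → U X) ∨
        (∀ X ∈ infSubsets A, InitSeg t X → Follows S t X → ¬ U X)) := fun t => by
    by_cases h : Wins 𝒰 A U t
    · exact h.exists_strategy.imp fun S hS => ⟨hS.1, .inl hS.2⟩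
    · exact (exists_strategy_of_not_wins hU h).imp fun S hS => ⟨hS.1, .inr hS.2⟩
  choose S hS hS' using hdec
  refine ⟨fun t' => ⋂ t ∈ t'.powerset, S t t',
    fun t' => (biInter_finset_mem _).2 fun t _ => hS t t', fun B hBA t hfol => ?_⟩
  have hfol' : ∀ X ∈ infSubsets B, Follows (S t) t X := fun X hX =>
    hfol.mono subset_rfl hX.1 fun t' ht' => biInter_subset_of_mem (Finset.mem_powerset.2 ht')
  exact (hS' t).imp (fun h X hX ht => h X (infSubsets_mono hBA hX) ht (hfol' X hX))
    fun h X hX ht => h X (infSubsets_mono hBA hX) ht (hfol' X hX)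

theorem exists_nonprincipal_ultrafilter_mem (hA : A.Infinite) :
    ∃ 𝒰 : Ultrafilter ℕ, (𝒰 : Filter ℕ) ≤ cofinite ∧ A ∈ 𝒰 := by
  have := cofinite_inf_principal_neBot_iff.2 hA
  exact ⟨Ultrafilter.of (cofinite ⊓ 𝓟 A), (Ultrafilter.of_le _).trans inf_le_left,
    (Ultrafilter.of_le _).trans inf_le_right (mem_principal_self A)⟩

theorem exists_homogeneous_of_openOn {ι : Type*} [Finite ι] (hA : A.Infinite)
    {U : ι → Set ℕ → Prop} (hU : ∀ i, OpenOn A (U i)) :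
    ∃ B ∈ infSubsets A, ∀ i, (∀ X ∈ infSubsets B, U i X) ∨ (∀ X ∈ infSubsets B, ¬ U i X) := by
  obtain ⟨𝒰, h𝒰, hA𝒰⟩ := exists_nonprincipal_ultrafilter_mem hA
  choose S hS hdec using fun i => (hU i).exists_deciding_strategy 𝒰
  obtain ⟨B, hB, hfol⟩ := exists_follows h𝒰 hA𝒰 fun t => iInter_mem.2 fun i => hS i t
  refine ⟨B, hB, fun i => ?_⟩
  refine (hdec i B hB.1 ∅ (hfol.mono subset_rfl subset_rfl fun t _ => iInter_subset _ i)).imp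
    (fun h X hX => h X hX (.empty X)) fun h X hX => h X hX (.empty X)

theorem LocConst.exists_eq_const {K : Type*} [Finite K] (hA : A.Infinite) {f : Set ℕ → K}
    (hf : LocConst A f) : ∃ B ∈ infSubsets A, ∃ k, ∀ X ∈ infSubsets B, f X = k := by
  obtain ⟨B, hB, hhom⟩ := exists_homogeneous_of_openOn hA fun k => (hf.comp (· = k)).openOn
  refine ⟨B, hB, f B, (hhom (f B)).resolve_right fun h => ?_⟩
  exact h B (self_mem_infSubsets hB.2) rfl

theorem exists_openOn_not {U : ℕ → Set ℕ → Prop} (hA : A.Infinite) (hU : ∀ k, OpenOn A (U k)) :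
    ∃ B ∈ infSubsets A, ∀ k, OpenOn B (fun X => ¬ U k X) := by
  obtain ⟨𝒰, h𝒰, hA𝒰⟩ := exists_nonprincipal_ultrafilter_mem hA
  choose S hS hdec using fun k => (hU k).exists_deciding_strategy 𝒰
  obtain ⟨B, hB, hfol⟩ := exists_follows (S := fun t => ⋂ k ∈ Finset.range (t.card + 1), S k t)
    h𝒰 hA𝒰 fun t => (biInter_finset_mem _).2 fun k _ => hS k t
  refine ⟨B, hB, fun k X hX hUX => ?_⟩
  obtain ⟨t, -, ht, hk, -⟩ := (InitSeg.empty X).exists_le_card (P := fun _ => True) hX.2 trivial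
    (fun _ _ _ _ _ _ _ => trivial) k
  have hfol' : Follows (S k) t B := hfol.mono t.empty_subset subset_rfl fun t' ht' =>
    biInter_subset_of_mem (Finset.mem_range.2 (by have := Finset.card_le_card ht'; omega))
  have hnot := (hdec k B hB.1 t hfol').resolve_left fun h => hUX (h X hX ht)
  exact ⟨t.sup id + 1, fun Y hY hXY => hnot Y hY (ht.of_agree hXY)⟩

end Ramsey

section MinimalBadArray

variable {Q : Type*} [Preorder Q]

/-- A bad array on the infinite subsets of `base`: a locally constant map no value of which is below
its shift. The preorder is a better-quasi-order iff there is none. -/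
structure BadArray (Q : Type*) [Preorder Q] where
  base : Set ℕ
  infinite : base.Infinite
  val : Set ℕ → Q
  locConst : LocConst base val
  bad : ∀ X ∈ infSubsets base, ¬ val X ≤ val (dropMin X)

namespace BadArray

variable {ρ : Q → Ordinal.{w}} {m n : ℕ} {f g h : BadArray Q} {X r s : Set ℕ}

/-- The values of `g` lie below those of `f`, and have smaller rank where they differ. -/
def Refines (ρ : Q → Ordinal.{w}) (g f : BadArray Q) : Prop :=
  g.base ⊆ f.base ∧ ∀ X ∈ infSubsets g.base,
    g.val X = f.val X ∨ (ρ (g.val X) < ρ (f.val X) ∧ g.val X ≤ f.val X)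

/-- The values of `g` lie below those of `f`, and always have smaller rank. -/
def StrictlyRefines (ρ : Q → Ordinal.{w}) (g f : BadArray Q) : Prop :=
  g.base ⊆ f.base ∧ ∀ X ∈ infSubsets g.base, ρ (g.val X) < ρ (f.val X) ∧ g.val X ≤ f.val X

/-- `g` refines `f` without changing the base set below `m`. -/
def RefinesAbove (ρ : Q → Ordinal.{w}) (m : ℕ) (g f : BadArray Q) : Prop :=
  Refines ρ g f ∧ Agree m g.base f.base

/-- Strict supremum of the ranks of the values of `f` on the sets agreeing with `r` below `m`. -/
noncomputable def localRank (ρ : Q → Ordinal.{w}) (m : ℕ) (f : BadArray Q) (r : Set ℕ) :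
    Ordinal.{w} :=
  sInf {o | ∀ X ∈ infSubsets f.base, Agree m X r → ρ (f.val X) < o}

/-- No refinement of `f` that keeps the base set below `m` has a smaller local rank. -/
def MinimalAbove (ρ : Q → Ordinal.{w}) (m : ℕ) (f : BadArray Q) : Prop :=
  ∀ g, RefinesAbove ρ m g f → ∀ r, localRank ρ m f r ≤ localRank ρ m g r

theorem base_mem_infSubsets (f : BadArray Q) : f.base ∈ infSubsets f.base :=
  self_mem_infSubsets f.infinite

theorem localRank_le {o : Ordinal.{w}}
    (h : ∀ X ∈ infSubsets f.base, Agree m X r → ρ (f.val X) < o) : localRank ρ m f r ≤ o :=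
  csInf_le' h

theorem lt_localRank (hX : X ∈ infSubsets f.base) (h : Agree m X r) :
    ρ (f.val X) < localRank ρ m f r := by
  have hne : {o | ∀ X ∈ infSubsets f.base, Agree m X r → ρ (f.val X) < o}.Nonempty :=
    ⟨⨆ X : Set ℕ, succ (ρ (f.val X)), fun X _ _ =>
      (lt_succ _).trans_le (Ordinal.le_iSup (fun X : Set ℕ => succ (ρ (f.val X))) X)⟩
  exact csInf_mem hne X hX h

theorem localRank_congr (h : Agree m r s) : localRank ρ m f r = localRank ρ m f s :=
  le_antisymm (localRank_le fun _ hX hr => lt_localRank hX (hr.trans h))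
    (localRank_le fun _ hX hs => lt_localRank hX (hs.trans h.symm))

theorem localRank_anti (hmn : m ≤ n) : localRank ρ n f r ≤ localRank ρ m f r :=
  localRank_le fun _ hX h => lt_localRank hX (h.mono hmn)

namespace Refines

theorem refl (f : BadArray Q) : Refines ρ f f := ⟨subset_rfl, fun _ _ => .inl rfl⟩

theorem trans (h₁ : Refines ρ h g) (h₂ : Refines ρ g f) : Refines ρ h f := by
  refine ⟨h₁.1.trans h₂.1, fun X hX => ?_⟩
  rcases h₁.2 X hX with h | h <;> rcases h₂.2 X (infSubsets_mono h₁.1 hX) with h' | h'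
  · exact .inl (h.trans h')
  · exact .inr (h ▸ h')
  · exact .inr (h' ▸ h)
  · exact .inr ⟨h.1.trans h'.1, h.2.trans h'.2⟩

theorem rank_le (h : Refines ρ g f) (hX : X ∈ infSubsets g.base) : ρ (g.val X) ≤ ρ (f.val X) := by
  rcases h.2 X hX with h | h
  · rw [h]
  · exact h.1.le

theorem localRank_le (h : Refines ρ g f) (r : Set ℕ) : localRank ρ m g r ≤ localRank ρ m f r :=
  BadArray.localRank_le fun _ hX hr =>
    (h.rank_le hX).trans_lt (lt_localRank (infSubsets_mono h.1 hX) hr)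

end Refines

theorem StrictlyRefines.trans_refines (h₁ : StrictlyRefines ρ h g) (h₂ : Refines ρ g f) :
    StrictlyRefines ρ h f := by
  refine ⟨h₁.1.trans h₂.1, fun X hX => ?_⟩
  have hlt := h₁.2 X hX
  rcases h₂.2 X (infSubsets_mono h₁.1 hX) with h | h
  · rwa [← h]
  · exact ⟨hlt.1.trans h.1, hlt.2.trans h.2⟩

theorem RefinesAbove.refl (m : ℕ) (f : BadArray Q) : RefinesAbove ρ m f f :=
  ⟨.refl f, fun _ _ => Iff.rfl⟩

theorem RefinesAbove.trans (h₁ : RefinesAbove ρ m h g) (h₂ : RefinesAbove ρ m g f) :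
    RefinesAbove ρ m h f :=
  ⟨h₁.1.trans h₂.1, h₁.2.trans h₂.2⟩

theorem RefinesAbove.mono (h : RefinesAbove ρ n g f) (hmn : m ≤ n) : RefinesAbove ρ m g f :=
  ⟨h.1, h.2.mono hmn⟩

theorem exists_minimalAbove (ρ : Q → Ordinal.{w}) (m : ℕ) (f : BadArray Q) :
    ∃ g, RefinesAbove ρ m g f ∧ MinimalAbove ρ m g := by
  -- only the trace of `r` below `m` matters, so finitely many local ranks have to be minimized
  let D : BadArray Q → Set (Fin m) → Ordinal.{w} := fun g r => localRank ρ m g (Fin.val '' r)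
  obtain ⟨g, hg, hmin⟩ := (InvImage.wf D wellFounded_lt).has_min {g | RefinesAbove ρ m g f}
    ⟨f, .refl m f⟩
  refine ⟨g, hg, fun g' hg' r => ?_⟩
  have hDg : D g ≤ D g' := by
    by_contra hcon
    exact hmin g' (hg'.trans hg) (lt_of_le_not_ge (fun r => hg'.1.localRank_le _) hcon)
  have htrace : Agree m r (Fin.val '' (Fin.val ⁻¹' r : Set (Fin m))) := fun i hi =>
    ⟨fun h => ⟨⟨i, hi⟩, h, rfl⟩, by rintro ⟨j, hj, rfl⟩; exact hj⟩
  rw [localRank_congr htrace, localRank_congr (f := g') htrace]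
  exact hDg _

section Patch

open scoped Classical in
/-- The array `f` with its values on the infinite subsets of the base of `g` replaced by the smaller
values of `g`; the base is cut down so that these subsets form an open family. -/
noncomputable def patch (m : ℕ) (g f : BadArray Q) (hsub : g.base ⊆ f.base)
    (hle : ∀ X ∈ infSubsets g.base, g.val X ≤ f.val X) : BadArray Q where
  base := f.base ∩ Iio m ∪ g.base
  infinite := g.infinite.mono subset_union_right
  val X := if X ⊆ g.base then g.val X else f.val X
  locConst := g.locConst.ite_subset hsub f.locConst m
  bad X hX := by
    by_cases hXg : X ⊆ g.base
    · simp only [if_pos hXg, if_pos ((dropMin_subset X).trans hXg)]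
      exact g.bad X ⟨hXg, hX.2⟩
    · have hbad := f.bad X (infSubsets_mono (union_subset inter_subset_left hsub) hX)
      by_cases hdX : dropMin X ⊆ g.base
      · simp only [if_neg hXg, if_pos hdX]
        exact fun h => hbad (h.trans (hle _ ⟨hdX, (dropMin_mem_infSubsets hX).2⟩))
      · simpa only [if_neg hXg, if_neg hdX] using hbad

variable (hsub : g.base ⊆ f.base) (hle : ∀ X ∈ infSubsets g.base, g.val X ≤ f.val X)

theorem patch_val_of_subset (hX : X ⊆ g.base) : (patch m g f hsub hle).val X = g.val X :=
  if_pos hX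

theorem StrictlyRefines.refinesAbove_patch (h : StrictlyRefines ρ g f) :
    RefinesAbove ρ m (patch m g f h.1 fun X hX => (h.2 X hX).2) f := by
  refine ⟨⟨union_subset inter_subset_left h.1, fun X hX => ?_⟩,
    fun i hi => ⟨fun hif => hif.elim And.left (@h.1 i), fun hif => .inl ⟨hif, hi⟩⟩⟩
  by_cases hXg : X ⊆ g.base
  · rw [patch_val_of_subset _ _ hXg]
    exact .inr (h.2 X ⟨hXg, hX.2⟩)
  · exact .inl (if_neg hXg)

theorem MinimalAbove.succ_lt_localRank (hf : MinimalAbove ρ m f) (h : StrictlyRefines ρ g f) :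
    succ (ρ (f.val g.base)) < localRank ρ m f g.base := by
  refine (succ_le_of_lt (lt_localRank (infSubsets_mono h.1 g.base_mem_infSubsets)
    fun _ _ => Iff.rfl)).lt_of_ne fun hsucc => ?_
  -- if the supremum were attained, patching `g` into `f` would lower it
  refine (hf _ h.refinesAbove_patch g.base).not_gt (hsucc ▸ lt_succ_of_le (localRank_le ?_))
  intro Y hY hYg
  have hYsub : Y ⊆ g.base := hYg.symm.subset_of_subset hY.1 subset_rfl
  rw [patch_val_of_subset _ _ hYsub]
  refine (h.2 Y ⟨hYsub, hY.2⟩).1.trans_le (lt_succ_iff.1 ?_)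
  exact (lt_localRank (infSubsets_mono h.1 ⟨hYsub, hY.2⟩) hYg).trans_eq hsucc.symm

end Patch

end BadArray

open BadArray

/-- A sequence of bad arrays in which each array is minimal above its level and refines its
predecessor above the next level; a point of the base lies between consecutive levels, which keeps
the intersection of the bases infinite. -/
structure MinimizingSeq (ρ : Q → Ordinal.{w}) where
  arr : ℕ → BadArray Q
  level : ℕ → ℕ
  exists_mem : ∀ k, ∃ a ∈ (arr k).base, level k ≤ a ∧ a < level (k + 1)
  refines_succ : ∀ k, RefinesAbove ρ (level (k + 1)) (arr (k + 1)) (arr k)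
  minimal : ∀ k, MinimalAbove ρ (level k) (arr k)

namespace MinimizingSeq

variable {ρ : Q → Ordinal.{w}} {j k : ℕ} {X Y : Set ℕ}

theorem exists_refines (ρ : Q → Ordinal.{w}) (f : BadArray Q) :
    ∃ s : MinimizingSeq ρ, Refines ρ (s.arr 0) f := by
  have hstep : ∀ p : BadArray Q × ℕ, ∃ q : BadArray Q × ℕ,
      (∃ a ∈ p.1.base, p.2 ≤ a ∧ a < q.2) ∧ RefinesAbove ρ q.2 q.1 p.1 ∧
        MinimalAbove ρ q.2 q.1 := by
    rintro ⟨p, m⟩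
    obtain ⟨a, ha, hma⟩ := p.infinite.exists_gt m
    obtain ⟨q, hq, hmin⟩ := exists_minimalAbove ρ (a + 1) p
    exact ⟨⟨q, a + 1⟩, ⟨a, ha, hma.le, a.lt_succ_self⟩, hq, hmin⟩
  choose next hmem href hmin using hstep
  obtain ⟨p₀, hp₀, hmin₀⟩ := exists_minimalAbove ρ 0 f
  have hiter : ∀ k, next^[k + 1] (p₀, 0) = next (next^[k] (p₀, 0)) := fun k =>
    Function.iterate_succ_apply' _ _ _
  refine ⟨⟨fun k => (next^[k] (p₀, 0)).1, fun k => (next^[k] (p₀, 0)).2, fun k => ?_, fun k => ?_,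
    fun k => ?_⟩, hp₀.1⟩
  · rw [hiter]
    exact hmem _
  · rw [hiter]
    exact href _
  · cases k with
    | zero => exact hmin₀
    | succ k =>
      rw [hiter]
      exact hmin _

variable (s : MinimizingSeq ρ)

theorem level_strictMono : StrictMono s.level := strictMono_nat_of_lt_succ fun k =>
  let ⟨_, _, hle, hlt⟩ := s.exists_mem k
  hle.trans_lt hlt

theorem refinesAbove (hkj : k ≤ j) : RefinesAbove ρ (s.level (k + 1)) (s.arr j) (s.arr k) := by
  induction j, hkj using Nat.le_induction with
  | base => exact .refl _ _
  | succ j hkj ih =>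
    exact ((s.refines_succ j).mono (s.level_strictMono.monotone (by omega))).trans ih

/-- The common part of the bases. -/
def core : Set ℕ := ⋂ k, (s.arr k).base

theorem core_subset (k : ℕ) : s.core ⊆ (s.arr k).base := iInter_subset _ k

theorem core_infinite : s.core.Infinite := by
  choose a ha hle hlt using s.exists_mem
  have hmono : StrictMono a := strictMono_nat_of_lt_succ fun k => (hlt k).trans_le (hle (k + 1))
  refine (infinite_range_of_injective hmono.injective).mono (range_subset_iff.2 fun k =>
    mem_iInter.2 fun j => ?_)
  rcases le_total k j with h | h
  · exact ((s.refinesAbove h).2 _ (hlt k)).2 (ha k)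
  · exact (s.refinesAbove h).1.1 (ha k)

/-- The local rank at `X` of the `k`-th array, which decreases with `k`. -/
noncomputable def depth (k : ℕ) (X : Set ℕ) : Ordinal.{w} := localRank ρ (s.level k) (s.arr k) X

/-- The local rank at `X` has reached its limit at stage `k`. -/
def Stable (k : ℕ) (X : Set ℕ) : Prop := ∀ j ≥ k, s.depth k X ≤ s.depth j X

theorem depth_antitone (X : Set ℕ) : Antitone fun k => s.depth k X := fun _ _ hkj =>
  (localRank_anti (s.level_strictMono.monotone hkj)).trans ((s.refinesAbove hkj).1.localRank_le X)

theorem depth_congr (h : Agree (s.level k) X Y) : s.depth k X = s.depth k Y := localRank_congr h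

variable {s}

theorem Stable.mono (h : s.Stable k X) (hkj : k ≤ j) : s.Stable j X := fun i hi =>
  (s.depth_antitone X hkj).trans (h i (hkj.trans hi))

theorem exists_stable (X : Set ℕ) : ∃ k, s.Stable k X := by
  obtain ⟨_, ⟨k, rfl⟩, hk⟩ := wellFounded_lt.has_min (range fun k => s.depth k X) ⟨_, 0, rfl⟩
  exact ⟨k, fun j _ => not_lt.1 (hk _ ⟨j, rfl⟩)⟩

theorem Stable.depth_le (hk : s.Stable k X) (hX : X ∈ infSubsets s.core) :
    s.depth k X ≤ succ (ρ ((s.arr k).val X)) := by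
  obtain ⟨n, hn⟩ := (s.arr k).locConst X (infSubsets_mono (s.core_subset k) hX)
  have href := (s.refinesAbove (le_max_left k n)).1
  refine (hk (max k n) (le_max_left _ _)).trans (localRank_le fun Y hY hYX => lt_succ_of_le ?_)
  have hXY : Agree n X Y := hYX.symm.mono ((le_max_right k n).trans (s.level_strictMono.id_le _))
  exact (href.rank_le hY).trans_eq (by rw [hn Y (infSubsets_mono href.1 hY) hXY])

theorem Stable.val_eq (hk : s.Stable k X) (hX : X ∈ infSubsets s.core) (hkj : k ≤ j) :
    (s.arr j).val X = (s.arr k).val X := by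
  refine ((s.refinesAbove hkj).1.2 X (infSubsets_mono (s.core_subset j) hX)).resolve_right
    fun h => ?_
  have hlt : ρ ((s.arr k).val X) < s.depth k X :=
    lt_localRank (infSubsets_mono (s.core_subset k) hX) fun _ _ => Iff.rfl
  exact h.1.not_ge (lt_succ_iff.1 (hlt.trans_le ((hk j hkj).trans ((hk.mono hkj).depth_le hX))))

theorem exists_openOn_stable (s : MinimizingSeq ρ) :
    ∃ B ∈ infSubsets s.core, ∀ k, OpenOn B (s.Stable k) := by
  obtain ⟨B, hB, hopen⟩ := exists_openOn_not (U := fun k X => ¬ s.Stable k X)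
    s.core_infinite fun k X _ hX => by
      obtain ⟨j, hkj, hj⟩ : ∃ j, ∃ _ : j ≥ k, s.depth j X < s.depth k X := by
        simpa only [Stable, not_forall, not_le] using hX
      refine ⟨s.level j, fun Y _ hXY hY => (hY j hkj).not_gt ?_⟩
      rwa [← s.depth_congr hXY, ← s.depth_congr (hXY.mono (s.level_strictMono.monotone hkj))]
  exact ⟨B, hB, fun k => by simpa only [not_not] using hopen k⟩

theorem exists_limit (s : MinimizingSeq ρ) : ∃ f : BadArray Q, f.base ⊆ s.core ∧
    ∀ k, ∀ X ∈ infSubsets f.base, s.Stable k X → f.val X = (s.arr k).val X := by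
  obtain ⟨B, hB, hopen⟩ := s.exists_openOn_stable
  have hcore : ∀ {X}, X ∈ infSubsets B → X ∈ infSubsets s.core := @(infSubsets_mono hB.1)
  choose κ hκ using exists_stable (s := s)
  have hval : ∀ k, ∀ X ∈ infSubsets B, s.Stable k X →
      (s.arr (κ X)).val X = (s.arr k).val X := fun k X hX hk =>
    ((hκ X).val_eq (hcore hX) (le_max_left (κ X) k)).symm.trans
      (hk.val_eq (hcore hX) (le_max_right (κ X) k))
  refine ⟨⟨B, hB.2, fun X => (s.arr (κ X)).val X, fun X hX => ?_, fun X hX => ?_⟩, hB.1, hval⟩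
  · obtain ⟨m, hm⟩ := hopen _ X hX (hκ X)
    obtain ⟨n, hn⟩ := (s.arr (κ X)).locConst X (infSubsets_mono (s.core_subset _) (hcore hX))
    refine ⟨max m n, fun Y hY hXY => ?_⟩
    simp only [hval _ Y hY (hm Y hY (hXY.mono (le_max_left _ _)))]
    exact hn Y (infSubsets_mono (s.core_subset _) (hcore hY)) (hXY.mono (le_max_right _ _))
  · have hdX := dropMin_mem_infSubsets hX
    rw [hval _ X hX ((hκ X).mono (le_max_left _ (κ (dropMin X)))),
      hval _ _ hdX ((hκ (dropMin X)).mono (le_max_right (κ X) _))]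
    exact (s.arr _).bad X (infSubsets_mono (s.core_subset _) (hcore hX))

end MinimizingSeq

theorem BadArray.exists_forall_not_strictlyRefines (ρ : Q → Ordinal.{w}) (f : BadArray Q) :
    ∃ g : BadArray Q, Refines ρ g f ∧ ∀ h, ¬ StrictlyRefines ρ h g := by
  obtain ⟨s, hs⟩ := MinimizingSeq.exists_refines ρ f
  obtain ⟨g, hg, hval⟩ := s.exists_limit
  have href : ∀ k, Refines ρ g (s.arr k) := fun k => by
    refine ⟨hg.trans (s.core_subset k), fun X hX => ?_⟩
    obtain ⟨i, hi⟩ := MinimizingSeq.exists_stable (s := s) X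
    rw [hval _ X hX (hi.mono (le_max_left i k))]
    exact (s.refinesAbove (le_max_right i k)).1.2 X
      (infSubsets_mono (hg.trans (s.core_subset _)) hX)
  refine ⟨g, (href 0).trans hs, fun h hh => ?_⟩
  have hcore : h.base ∈ infSubsets s.core := ⟨hh.1.trans hg, h.infinite⟩
  obtain ⟨k, hk⟩ := MinimizingSeq.exists_stable (s := s) h.base
  exact ((s.minimal k).succ_lt_localRank (hh.trans_refines (href k))).not_ge (hk.depth_le hcore)

end MinimalBadArray

section Criterion

variable {Q : Type*}

theorem LocConst.exists_le_dropMin {κ Λ : Type*} [Finite κ] [LinearOrder Λ] [WellFoundedLT Λ]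
    {A : Set ℕ} (hA : A.Infinite) {f : Set ℕ → Q} (hf : LocConst A f) (ℓ : κ → Q → Λ) :
    ∃ B ∈ infSubsets A, ∀ i, ∀ X ∈ infSubsets B, ℓ i (f X) ≤ ℓ i (f (dropMin X)) := by
  obtain ⟨B, hB, hhom⟩ := exists_homogeneous_of_openOn hA fun i =>
    ((hf.prodMk hf.comp_dropMin).comp fun p => ℓ i p.1 ≤ ℓ i p.2).openOn
  refine ⟨B, hB, fun i => (hhom i).resolve_right fun hlt => ?_⟩
  have hmem : ∀ n : ℕ, dropMin^[n] B ∈ infSubsets B := fun n => by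
    induction n with
    | zero => exact self_mem_infSubsets hB.2
    | succ n ih =>
      rw [Function.iterate_succ_apply']
      exact dropMin_mem_infSubsets ih
  refine not_strictAnti_of_wellFoundedLT (fun n => ℓ i (f (dropMin^[n] B)))
    (strictAnti_nat_of_succ_lt fun n => ?_)
  rw [Function.iterate_succ_apply']
  exact not_le.1 (hlt _ (hmem n))

variable [Preorder Q]

namespace BadArray

/-- A bad sequence `u`, viewed as the bad array sending `X` to the term of `u` at `min X`. -/
noncomputable def ofBadSeq (u : ℕ → Q) (hu : ∀ m n, m < n → ¬ u m ≤ u n) : BadArray Q where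
  base := univ
  infinite := infinite_univ
  val X := u (sInf X)
  locConst X hX := ⟨sInf X + 1, fun Y _ hXY => by
    simp only [hXY.sInf_eq hX.2.nonempty (Nat.lt_succ_self _)]⟩
  bad X hX := by
    have hmem := Nat.sInf_mem (dropMin_mem_infSubsets hX).2.nonempty
    exact hu _ _ (lt_of_le_of_ne (Nat.sInf_le hmem.1) (Ne.symm hmem.2))

/-- The restriction of a bad array to a smaller base. -/
def restrict (f : BadArray Q) {B : Set ℕ} (hB : B ∈ infSubsets f.base) : BadArray Q where
  base := B
  infinite := hB.2
  val := f.val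
  locConst := f.locConst.mono hB.1
  bad X hX := f.bad X (infSubsets_mono hB.1 hX)

end BadArray

variable {ι κ K Λ : Type*} [Finite ι] [Finite κ] [Finite K] [LinearOrder Λ] [WellFoundedLT Λ]
  {ρ : Q → Ordinal.{w}} {kind : Q → K} {ℓ : κ → Q → Λ} {Ch : ι → Q → Set Q}

theorem BadArray.exists_strictlyRefines_of_children
    (hCh : ∀ i p, ∀ p' ∈ Ch i p, ρ p' < ρ p ∧ p' ≤ p)
    (hle : ∀ p q, kind p = kind q → (∀ i, ℓ i p ≤ ℓ i q) →
      (∀ i, ∀ p' ∈ Ch i p, ∃ q' ∈ Ch i q, p' ≤ q') → p ≤ q)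
    (f : BadArray Q) : ∃ g, StrictlyRefines ρ g f := by
  obtain ⟨B, hB, hlabel⟩ := f.locConst.exists_le_dropMin f.infinite ℓ
  obtain ⟨C, hC, k, hkind⟩ := ((f.locConst.mono hB.1).comp kind).exists_eq_const hB.2
  let f' : BadArray Q := f.restrict (B := C) ⟨hC.1.trans hB.1, hC.2⟩
  have hpair := f'.locConst.prodMk f'.locConst.comp_dropMin
  have hchild : ∀ X ∈ infSubsets C, ∃ c : ι × Q, c.2 ∈ Ch c.1 (f.val X) ∧
      ∀ q' ∈ Ch c.1 (f.val (dropMin X)), ¬ c.2 ≤ q' := fun X hX => by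
    by_contra! hcon
    refine f'.bad X hX (hle _ _ ?_ (fun i => hlabel i X (infSubsets_mono hC.1 hX))
      fun i p' hp' => hcon (i, p') hp')
    exact (hkind X hX).trans (hkind _ (dropMin_mem_infSubsets hX)).symm
  have : Nonempty (ι × Q) := (hchild C (self_mem_infSubsets hC.2)).nonempty
  -- the child is chosen from the pair of values alone, so that it is locally constant in `X`
  choose! c hc using fun pq : Q × Q => (id : (∃ c : ι × Q, c.2 ∈ Ch c.1 pq.1 ∧
    ∀ q' ∈ Ch c.1 pq.2, ¬ c.2 ≤ q') → _)
  obtain ⟨D, hD, i, hi⟩ := (hpair.comp fun pq => (c pq).1).exists_eq_const hC.2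
  have hspec : ∀ X ∈ infSubsets D, (c (f.val X, f.val (dropMin X))).2 ∈ Ch i (f.val X) ∧
      ∀ q' ∈ Ch i (f.val (dropMin X)), ¬ (c (f.val X, f.val (dropMin X))).2 ≤ q' := fun X hX =>
    hi X hX ▸ hc (f.val X, f.val (dropMin X)) (hchild X (infSubsets_mono hD.1 hX))
  refine ⟨⟨D, hD.2, fun X => (c (f.val X, f.val (dropMin X))).2,
    (hpair.mono hD.1).comp fun pq => (c pq).2, fun X hX => ?_⟩, ?_, fun X hX => ?_⟩
  · exact (hspec X hX).2 _ (hspec _ (dropMin_mem_infSubsets hX)).1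
  · exact hD.1.trans (hC.1.trans hB.1)
  · exact hCh i _ _ (hspec X hX).1

theorem wellQuasiOrdered_of_children (hCh : ∀ i p, ∀ p' ∈ Ch i p, ρ p' < ρ p ∧ p' ≤ p)
    (hle : ∀ p q, kind p = kind q → (∀ i, ℓ i p ≤ ℓ i q) →
      (∀ i, ∀ p' ∈ Ch i p, ∃ q' ∈ Ch i q, p' ≤ q') → p ≤ q) :
    WellQuasiOrdered (α := Q) (· ≤ ·) := by
  intro u
  by_contra! hu
  obtain ⟨g, -, hg⟩ := (BadArray.ofBadSeq u hu).exists_forall_not_strictlyRefines ρ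
  obtain ⟨h, hh⟩ := g.exists_strictlyRefines_of_children hCh hle
  exact hg h hh

end Criterion

section Suborders

/-- Embeddability of linear orders: there is a strictly increasing map from `α` to `β`. Applied to
sets, it is embeddability of suborders. -/
def Emb (α β : Type*) [LT α] [LT β] : Prop :=
  ∃ f : α → β, ∀ x y, x < y → f x < f y

/-- Every element of the suborder `A` lies below every element of the suborder `B`. -/
def Precedes {X : Type*} [LT X] (A B : Set X) : Prop :=
  ∀ a ∈ A, ∀ b ∈ B, a < b

/-- The part of the suborder `C` that `r` maps to `d`: the summand at position `d` when `r` is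
monotone and `C` is viewed as an ordered sum over `r '' C`. -/
def fiber {X D : Type*} (C : Set X) (r : X → D) (d : D) : Set X :=
  C ∩ r ⁻¹' {d}

/-- The suborder `C` as a suborder of the dual order. -/
abbrev dualSet {X : Type*} (C : Set X) : Set Xᵒᵈ :=
  OrderDual.ofDual ⁻¹' C

variable {X Y D α β γ : Type*} [LinearOrder X] [LinearOrder Y] [LinearOrder D]
  [LinearOrder α] [LinearOrder β] [LinearOrder γ]

theorem Emb.refl (α : Type*) [LinearOrder α] : Emb α α :=
  ⟨id, fun _ _ => id⟩

theorem Emb.trans (h : Emb α β) (h' : Emb β γ) : Emb α γ :=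
  let ⟨f, hf⟩ := h
  let ⟨g, hg⟩ := h'
  ⟨g ∘ f, fun x y hxy => hg _ _ (hf x y hxy)⟩

theorem Emb.of_subset {A B : Set X} (h : A ⊆ B) : Emb A B :=
  ⟨inclusion h, fun _ _ => id⟩

theorem Emb.dual (h : Emb α β) : Emb αᵒᵈ βᵒᵈ :=
  let ⟨f, hf⟩ := h
  ⟨OrderDual.toDual ∘ f ∘ OrderDual.ofDual, fun x y => hf y x⟩

theorem Emb.dualSet {A : Set X} {B : Set Y} (h : Emb A B) : Emb (dualSet A) (dualSet B) :=
  h.dual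

theorem emb_iff_embedsIn : Emb α β ↔ EmbedsIn ((· < ·) : α → α → Prop) ((· < ·) : β → β → Prop) :=
  ⟨fun ⟨f, hf⟩ => have hf : StrictMono f := hf; ⟨f, hf.injective, fun _ _ => hf.lt_iff_lt.symm⟩,
    fun ⟨f, _, hf⟩ => ⟨f, fun x y => (hf x y).1⟩⟩

theorem Precedes.mono {A B A' B' : Set X} (h : Precedes A B) (hA : A' ⊆ A) (hB : B' ⊆ B) :
    Precedes A' B' :=
  fun a ha b hb => h a (hA ha) b (hB hb)

theorem Precedes.dual {A B : Set X} (h : Precedes A B) : Precedes (dualSet B) (dualSet A) :=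
  fun b hb a ha => h a ha b hb

theorem precedes_fiber {C : Set X} {r : X → D} (hr : MonotoneOn r C) {d e : D} (h : d < e) :
    Precedes (fiber C r d) (fiber C r e) := by
  rintro x ⟨hx, rfl⟩ y ⟨hy, rfl⟩
  exact hr.reflect_lt hx hy h

theorem ordConnected_inter_preimage {C : Set X} {r : X → D} (hr : MonotoneOn r C)
    (hC : C.OrdConnected) {I : Set D} (hI : I.OrdConnected) : (C ∩ r ⁻¹' I).OrdConnected := by
  refine ⟨fun x hx y hy z hz => ?_⟩
  have hzC : z ∈ C := hC.out hx.1 hy.1 hz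
  exact ⟨hzC, hI.out hx.2 hy.2 ⟨hr hx.1 hzC hz.1, hr hzC hy.1 hz.2⟩⟩

theorem Emb.glue {C : Set X} {C' : Set Y} {r : X → D} (hr : MonotoneOn r C)
    {T : ↥(r '' C) → Set Y} (hT : ∀ d, T d ⊆ C') (hlt : ∀ d e, d < e → Precedes (T d) (T e))
    (h : ∀ d : ↥(r '' C), Emb (fiber C r d) (T d)) : Emb C C' := by
  choose f hf using h
  let d : C → ↥(r '' C) := fun x => ⟨r x, mem_image_of_mem r x.2⟩
  refine ⟨fun x => ⟨f (d x) ⟨x, x.2, rfl⟩, hT _ (Subtype.coe_prop _)⟩, fun x y hxy => ?_⟩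
  rcases (hr x.2 y.2 hxy.le).lt_or_eq with hlt' | heq
  · exact hlt (d x) (d y) hlt' _ (Subtype.coe_prop _) _ (Subtype.coe_prop _)
  · have hsame : ∀ d e : ↥(r '' C), d = e → ∀ hx hy,
        (f d ⟨x, x.2, hx⟩ : Y) < f e ⟨y, y.2, hy⟩ := by
      rintro d _ rfl hx hy
      exact hf d _ _ hxy
    exact hsame (d x) (d y) (Subtype.ext heq) rfl rfl

theorem Emb.union {A B : Set X} {A' B' : Set Y} (h : Precedes A B) (h' : Precedes A' B')
    (hA : Emb A A') (hB : Emb B B') : Emb ↥(A ∪ B) ↥(A' ∪ B') := by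
  classical
  obtain ⟨f, hf⟩ := hA
  obtain ⟨g, hg⟩ := hB
  refine ⟨fun x => if hx : x.1 ∈ A then ⟨f ⟨x, hx⟩, Or.inl (f _).2⟩
    else ⟨g ⟨x, x.2.resolve_left hx⟩, Or.inr (g _).2⟩, fun x y hxy => ?_⟩
  by_cases hx : x.1 ∈ A <;> by_cases hy : y.1 ∈ A
  · simp only [dif_pos hx, dif_pos hy]
    exact hf _ _ hxy
  · simp only [dif_pos hx, dif_neg hy]
    exact h' _ (f _).2 _ (g _).2
  · exact absurd (h y hy x (x.2.resolve_left hx)) (lt_asymm hxy)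
  · simp only [dif_neg hx, dif_neg hy]
    exact hg _ _ hxy

theorem not_scattered_of_dense {R : Set X} (hR : R.Nontrivial)
    (hd : ∀ x ∈ R, ∀ y ∈ R, x < y → ∃ z ∈ R, x < z ∧ z < y) :
    ¬ Scattered R (fun a b => a.1 < b.1) := by
  have : DenselyOrdered R := ⟨fun x y hxy =>
    let ⟨z, hz, hxz, hzy⟩ := hd x x.2 y y.2 hxy
    ⟨⟨z, hz⟩, hxz, hzy⟩⟩
  have : Nontrivial R := hR.coe_sort
  obtain ⟨f⟩ := Order.embedding_from_countable_to_dense ℚ R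
  exact not_not_intro ⟨f, f.injective, fun _ _ => f.lt_iff_lt.symm⟩

theorem Scattered.of_emb (hβ : Scattered β (· < ·)) (h : Emb α β) : Scattered α (· < ·) :=
  fun hα => hβ (emb_iff_embedsIn.1 ((emb_iff_embedsIn.2 hα).trans h))

theorem SigmaScattered.of_emb (hβ : SigmaScattered β (· < ·)) (h : Emb α β) :
    SigmaScattered α (· < ·) := by
  obtain ⟨S, hS, hscat⟩ := hβ
  obtain ⟨f, hf⟩ := h
  refine ⟨fun n => f ⁻¹' S n, ?_, fun n => (hscat n).of_emb ⟨fun x => ⟨f x, x.2⟩, ?_⟩⟩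
  · rw [← preimage_iUnion, hS, preimage_univ]
  · exact fun x y => hf x y

end Suborders

section SumClosed

variable {X : Type*} [LinearOrder X]

/-- A property of suborders that passes to smaller suborders, holds for singletons, and is preserved
by binary ordered sums and by unions of increasing sequences of initial and of final segments. -/
structure SumClosed (P : Set X → Prop) : Prop where
  mono : ∀ {A B}, A ⊆ B → P B → P A
  singleton : ∀ x, P {x}
  union : ∀ {A B}, Precedes A B → P A → P B → P (A ∪ B)
  of_forall_inter_Iic : ∀ {C}, (∀ y ∈ C, P (C ∩ Iic y)) → P C
  of_forall_inter_Ici : ∀ {C}, (∀ y ∈ C, P (C ∩ Ici y)) → P C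

/-- `ρ` is a monotone retraction of the linear order onto its densely ordered subset `R`. -/
structure DenseRetract (R : Set X) (ρ : X → X) : Prop where
  mono : Monotone ρ
  mem : ∀ x, ρ x ∈ R
  fix : ∀ x ∈ R, ρ x = x
  dense : ∀ x ∈ R, ∀ y ∈ R, x < y → ∃ z ∈ R, x < z ∧ z < y

namespace SumClosed

variable {P : Set X → Prop} {S R : Set X} {x y z : X}

theorem of_split (hP : SumClosed P) {C : Set X} (d : X) (h : P (C ∩ Iio d)) (h' : P (C ∩ Ici d)) :
    P C := by
  refine hP.mono (fun z hz => ?_) (hP.union (fun a ha b hb => ha.2.trans_le hb.2) h h')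
  exact (lt_or_ge z d).imp (⟨hz, ·⟩) (⟨hz, ·⟩)

theorem of_forall_Icc (hP : SumClosed P) {C : Set X} (h : ∀ x ∈ C, ∀ y ∈ C, P (Icc x y)) : P C :=
  hP.of_forall_inter_Iic fun y hy => hP.of_forall_inter_Ici fun x hx =>
    hP.mono (B := Icc x y) (fun _ hz => ⟨hz.2, hz.1.2⟩) (h x hx.1 y hy)

theorem uIcc_trans (hP : SumClosed P) (h : P (uIcc x y)) (h' : P (uIcc y z)) : P (uIcc x z) := by
  rcases le_total x z with hxz | hzx
  · refine hP.of_split y (hP.mono (fun t ht => ?_) h) (hP.mono (fun t ht => ?_) h') <;>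
      rw [uIcc_of_le hxz] at ht
    · exact mem_uIcc.2 (Or.inl ⟨ht.1.1, le_of_lt ht.2⟩)
    · exact mem_uIcc.2 (Or.inl ⟨ht.2, ht.1.2⟩)
  · refine hP.of_split y (hP.mono (fun t ht => ?_) h') (hP.mono (fun t ht => ?_) h) <;>
      rw [uIcc_of_ge hzx] at ht
    · exact mem_uIcc.2 (Or.inr ⟨ht.1.1, le_of_lt ht.2⟩)
    · exact mem_uIcc.2 (Or.inr ⟨ht.2, ht.1.2⟩)

theorem uIcc_self (hP : SumClosed P) (x : X) : P (uIcc x x) :=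
  (Set.uIcc_self (a := x)).symm ▸ hP.singleton x

theorem lt_of_not_Icc (hP : SumClosed P) (h : ¬ P (Icc x y)) : x < y := by
  by_contra! hyx
  refine h (hP.mono (fun z hz => ?_) (hP.singleton x))
  exact le_antisymm (hz.2.trans hyx) hz.1

theorem exists_mem_between (hP : SumClosed P) (hS : ∀ C, Disjoint C S → P C)
    (hxy : ¬ P (Icc x y)) : ∃ z ∈ S, ¬ P (Icc x z) ∧ ¬ P (Icc z y) := by
  by_contra! hno
  let L := {z ∈ Icc x y | P (Icc x z)}
  let U := {z ∈ Icc x y | P (Icc z y)}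
  let M := {z ∈ Icc x y | ¬ P (Icc x z) ∧ ¬ P (Icc z y)}
  have hL : P L := hP.of_forall_inter_Iic fun z hz =>
    hP.mono (B := Icc x z) (fun t ht => ⟨ht.1.1.1, ht.2⟩) hz.2
  have hU : P U := hP.of_forall_inter_Ici fun z hz =>
    hP.mono (B := Icc z y) (fun t ht => ⟨ht.2, ht.1.1.2⟩) hz.2
  have hM : P M := hS _ (disjoint_left.2 fun z hz hzS => hz.2.2 (hno z hzS hz.2.1))
  have hLM : Precedes L M := by
    intro a ha b hb
    by_contra! hba
    exact hb.2.1 (hP.mono (Icc_subset_Icc_right hba) ha.2)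
  have hLMU : Precedes (L ∪ M) U := by
    rintro a (ha | ha) b hb <;> by_contra! hba
    · refine hxy (hP.of_split a (hP.mono ?_ ha.2)
        (hP.mono ?_ (hP.mono (Icc_subset_Icc_left hba) hb.2)))
      · exact fun z hz => ⟨hz.1.1, le_of_lt hz.2⟩
      · exact fun z hz => ⟨hz.2, hz.1.2⟩
    · exact ha.2.2 (hP.mono (Icc_subset_Icc_left hba) hb.2)
  refine hxy (hP.mono (fun z hz => ?_) (hP.union hLMU (hP.union hLM hL hM) hU))
  by_cases hxz : P (Icc x z)
  · exact Or.inl (Or.inl ⟨hz, hxz⟩)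
  · by_cases hzy : P (Icc z y)
    · exact Or.inr ⟨hz, hzy⟩
    · exact Or.inl (Or.inr ⟨hz, hxz, hzy⟩)

theorem exists_transversal (hP : SumClosed P) (S : Set X) :
    ∃ R ⊆ S, (∀ x ∈ R, ∀ y ∈ R, P (uIcc x y) → x = y) ∧ ∀ s ∈ S, ∃ r ∈ R, P (uIcc r s) := by
  let E : Setoid S :=
    { r := fun x y => P (uIcc x.1 y.1)
      iseqv := ⟨fun x => hP.uIcc_self x.1, fun {x y} h => by rwa [uIcc_comm], hP.uIcc_trans⟩ }
  refine ⟨range fun c : Quotient E => c.out.1, ?_, ?_,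
    fun s hs => ⟨_, mem_range_self (Quotient.mk E ⟨s, hs⟩), Quotient.mk_out (s := E) ⟨s, hs⟩⟩⟩
  · rintro _ ⟨c, rfl⟩
    exact c.out.2
  · rintro _ ⟨c, rfl⟩ _ ⟨d, rfl⟩ h
    rw [Quotient.out_equiv_out.1 (show E c.out d.out from h)]

theorem exists_transversal_between (hP : SumClosed P) (hS : ∀ C, Disjoint C S → P C)
    (hR : ∀ s ∈ S, ∃ r ∈ R, P (uIcc r s)) (hxy : ¬ P (Icc x y)) :
    ∃ r ∈ R, ¬ P (Icc x r) ∧ ¬ P (Icc r y) := by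
  obtain ⟨z, hzS, hxz, hzy⟩ := hP.exists_mem_between hS hxy
  obtain ⟨r, hrR, hrz⟩ := hR z hzS
  have hxz' := hP.lt_of_not_Icc hxz
  have hzy' := hP.lt_of_not_Icc hzy
  refine ⟨r, hrR, fun hxr => ?_, fun hry => ?_⟩
  · rcases le_total x r with h | h
    · rw [← uIcc_of_le h] at hxr
      exact hxz (uIcc_of_le hxz'.le ▸ hP.uIcc_trans hxr hrz)
    · exact hxz (hP.mono (Icc_subset_uIcc.trans' (Icc_subset_Icc_left h)) hrz)
  · rcases le_total r y with h | h
    · rw [← uIcc_of_le h] at hry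
      exact hzy (uIcc_of_le hzy'.le ▸ hP.uIcc_trans (uIcc_comm r z ▸ hrz) hry)
    · exact hzy (hP.mono (Icc_subset_uIcc'.trans' (Icc_subset_Icc_right h)) hrz)

theorem exists_dense_transversal (hP : SumClosed P) (hS : ∀ C, Disjoint C S → P C)
    (hnot : ¬ P univ) : ∃ R ⊆ S, R.Nontrivial ∧ (∀ x ∈ R, ∀ y ∈ R, P (uIcc x y) → x = y) ∧
      (∀ x ∈ R, ∀ y ∈ R, x < y → ∃ z ∈ R, x < z ∧ z < y) ∧ ∀ s ∈ S, ∃ r ∈ R, P (uIcc r s) := by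
  obtain ⟨R, hRS, hR, hrep⟩ := hP.exists_transversal S
  refine ⟨R, hRS, ?_, hR, fun x hx y hy hxy => ?_, hrep⟩
  · obtain ⟨x, y, hxy⟩ : ∃ x y, ¬ P (Icc x y) := by
      by_contra! hall
      exact hnot (hP.of_forall_Icc fun x _ y _ => hall x y)
    obtain ⟨r, hr, hxr, -⟩ := hP.exists_transversal_between hS hrep hxy
    obtain ⟨r', hr', -, hr'r⟩ := hP.exists_transversal_between hS hrep hxr
    exact ⟨r', hr', r, hr, (hP.lt_of_not_Icc hr'r).ne⟩
  · obtain ⟨r, hr, hxr, hry⟩ := hP.exists_transversal_between hS hrep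
      (mt (fun h => hR x hx y hy (uIcc_of_le hxy.le ▸ h)) hxy.ne)
    exact ⟨r, hr, hP.lt_of_not_Icc hxr, hP.lt_of_not_Icc hry⟩

theorem univ_of_scattered (hP : SumClosed P) (hS : ∀ C, Disjoint C S → P C)
    (hscat : Scattered S (fun a b => a.1 < b.1)) : P univ := by
  by_contra hnot
  obtain ⟨R, hRS, hnt, -, hdense, -⟩ := hP.exists_dense_transversal hS hnot
  exact not_scattered_of_dense hnt hdense (hscat.of_emb (Emb.of_subset hRS))

theorem exists_denseRetract (hP : SumClosed P) (hnot : ¬ P univ) :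
    ∃ (R : Set X) (ρ : X → X), DenseRetract R ρ ∧ R.Nontrivial ∧
      (∀ x ∈ R, ∀ y ∈ R, x < y → ¬ P (Icc x y)) ∧ ∀ d, P (ρ ⁻¹' {d}) := by
  have hempty : P ∅ := hP.of_forall_Icc fun x hx => absurd hx (notMem_empty x)
  obtain ⟨R, -, hnt, hR, hdense, hrep⟩ := hP.exists_dense_transversal (S := univ)
    (fun C hC => by rwa [disjoint_univ.1 hC]) hnot
  choose ρ hρR hρ using fun x => hrep x (mem_univ x)
  have hR' : ∀ x ∈ R, ∀ y ∈ R, x < y → ¬ P (Icc x y) := fun x hx y hy hxy h =>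
    hxy.ne (hR x hx y hy (uIcc_of_le hxy.le ▸ h))
  refine ⟨R, ρ, ⟨fun x y hxy => ?_, hρR, fun x hx => hR _ (hρR x) x hx (hρ x), hdense⟩, hnt, hR',
    fun d => hP.of_forall_Icc ?_⟩
  · by_contra! hlt
    refine hR' _ (hρR y) _ (hρR x) hlt (hP.of_split x (hP.mono ?_ (hρ y))
      (hP.mono ?_ (hρ x)))
    · exact fun z hz => mem_uIcc.2 (Or.inl ⟨hz.1.1, (le_of_lt hz.2).trans hxy⟩)
    · exact fun z hz => mem_uIcc.2 (Or.inr ⟨hz.2, hz.1.2⟩)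
  · rintro x rfl y hy
    have hxy := hP.uIcc_trans (uIcc_comm (ρ x) x ▸ hρ x) (hy ▸ hρ y)
    exact hP.mono Icc_subset_uIcc hxy

end SumClosed

end SumClosed

section RegularSum

open Cardinal

variable {X Y D E : Type v} [LinearOrder X] [LinearOrder Y] [LinearOrder D] [LinearOrder E]

/-- `S` has the order type of the cardinal `κ`, which is moreover regular. Without reference to
order types: `S` is well-ordered, its proper initial segments have fewer than `κ` elements, and its
subsets with fewer than `κ` elements are strictly bounded. -/
structure IsRegularType (S : Set X) (κ : Cardinal.{v}) : Prop where
  isWF : S.IsWF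
  card_lt : ∀ d ∈ S, #↥(S ∩ Iio d) < κ
  exists_gt : ∀ T ⊆ S, #T < κ → ∃ d ∈ S, ∀ e ∈ T, e < d

/-- `r` exhibits `C` as an ordered sum over a regular cardinal `κ` in which every summand embeds
into cofinally many others. -/
structure IsRegularSum (C : Set X) (r : X → D) (κ : Cardinal.{v}) : Prop where
  mono : MonotoneOn r C
  isRegularType : IsRegularType (r '' C) κ
  recur : ∀ d ∈ r '' C, ∀ e ∈ r '' C, ∃ d' ∈ r '' C, e ≤ d' ∧ Emb (fiber C r d) (fiber C r d')

theorem IsRegularSum.emb {C : Set X} {r : X → D} {κ : Cardinal.{v}} {C' : Set Y} {r' : Y → E}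
    {κ' : Cardinal.{v}} (h : IsRegularSum C r κ) (h' : IsRegularSum C' r' κ') (hκ : κ ≤ κ')
    (hf : ∀ d ∈ r '' C, ∃ e ∈ r' '' C', Emb (fiber C r d) (fiber C' r' e)) : Emb C C' := by
  have hstep : ∀ (d : ↥(r '' C)) (g : ∀ e : ↥(r '' C), e < d → ↥(r' '' C')),
      ∃ e : ↥(r' '' C'), Emb (fiber C r d) (fiber C' r' e) ∧ ∀ e' h, g e' h < e := by
    intro d g
    let T : Set E := range fun e : ↥(r '' C ∩ Iio d.1) => (g ⟨e.1, e.2.1⟩ e.2.2).1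
    obtain ⟨b, hb, hTb⟩ := h'.isRegularType.exists_gt T
      (by rintro _ ⟨e, rfl⟩; exact (g _ _).2)
      (mk_range_le.trans_lt ((h.isRegularType.card_lt d.1 d.2).trans_le hκ))
    obtain ⟨e, he, hde⟩ := hf d.1 d.2
    obtain ⟨e', he', hbe', hee'⟩ := h'.recur e he b hb
    exact ⟨⟨e', he'⟩, hde.trans hee', fun x hx => (hTb _ ⟨⟨x.1, x.2, hx⟩, rfl⟩).trans_le hbe'⟩
  choose F hFemb hFlt using hstep
  have hwf : WellFounded (fun d e : ↥(r '' C) => d < e) := h.isRegularType.isWF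
  let G : ↥(r '' C) → ↥(r' '' C') := hwf.fix F
  have hG : ∀ d, G d = F d fun e _ => G e := hwf.fix_eq F
  refine Emb.glue h.mono (T := fun d => fiber C' r' (G d)) (fun _ => inter_subset_left)
    (fun d e hde => precedes_fiber h'.mono ?_) fun d => hG d ▸ hFemb d _
  rw [hG e]
  exact hFlt e (fun e' _ => G e') d hde

theorem exists_cofinal_isRegularType (C : Set X) :
    ∃ S ⊆ C, (∀ x ∈ C, ∃ s ∈ S, x ≤ s) ∧ ∃ κ, IsRegularType S κ := by
  obtain ⟨s, hs, hcard⟩ := Order.exists_cof_eq C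
  obtain ⟨lt', hwo, htype⟩ := exists_ord_eq s
  -- The points of `s` above all their predecessors in a well-order `lt'` of type `#s` stay cofinal.
  let A : Set s := {a | ∀ b, lt' b a → b < a}
  have hA : ∀ a ∈ A, ∀ b : s, b < a → b ∈ A → lt' b a := by
    intro a _ b hba hb
    rcases trichotomous_of lt' b a with h | h | h
    · exact h
    · exact absurd h hba.ne
    · exact absurd (hb a h) (not_lt_of_gt hba)
  let val : s → X := fun a => a.1.1
  have hcof : ∀ x ∈ C, ∃ t ∈ val '' A, x ≤ t := by
    intro x hx
    obtain ⟨y, hy, hxy⟩ := hs ⟨x, hx⟩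
    obtain ⟨z, hz, hyz⟩ := isCofinal_setOfPred_imp_lt lt' ⟨y, hy⟩
    exact ⟨val z, mem_image_of_mem val hz, le_trans (show x ≤ y.1 from hxy) hyz⟩
  refine ⟨val '' A, ?_, hcof, #s, ⟨?_, ?_, fun T hT hlt => ?_⟩⟩
  · rintro _ ⟨a, -, rfl⟩
    exact a.1.2
  · exact wellFoundedOn_image.2
      (hwo.wf.wellFoundedOn.mono' fun b hb a ha hba => hA a ha b hba hb)
  · rintro _ ⟨a, ha, rfl⟩
    refine (mk_le_mk_of_subset (t := val '' {b | lt' b a}) ?_).trans_lt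
      (mk_image_le.trans_lt (card_typein_lt a htype))
    rintro _ ⟨⟨b, hb, rfl⟩, hba⟩
    exact mem_image_of_mem val (hA a ha b hba hb)
  · have hncof : ¬ IsCofinal (Subtype.val ⁻¹' T : Set C) := fun h =>
      (Order.cof_le h).not_gt ((mk_preimage_of_injective _ _ Subtype.val_injective).trans_lt
        (hlt.trans_eq hcard))
    simp only [IsCofinal, not_forall, not_exists, not_and, not_le] at hncof
    obtain ⟨x, hx⟩ := hncof
    obtain ⟨d, hd, hxd⟩ := hcof x x.2
    refine ⟨d, hd, fun e he => lt_of_lt_of_le ?_ hxd⟩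
    obtain ⟨a, -, rfl⟩ := hT he
    exact hx a.1 he

theorem exists_regular_partition (C : Set X) :
    ∃ (r : X → X) (κ : Cardinal.{v}), MonotoneOn r C ∧ r '' C ⊆ C ∧ IsRegularType (r '' C) κ ∧
      ∀ x ∈ C, x ≤ r x := by
  obtain ⟨S, hSC, hcof, κ, hκ⟩ := exists_cofinal_isRegularType C
  have hceil : ∀ x, ∃ y, x ∈ C → y ∈ S ∧ x ≤ y ∧ ∀ s ∈ S, x ≤ s → y ≤ s := by
    intro x
    by_cases hx : x ∈ C
    · have hwf : (S ∩ Ici x).IsWF := hκ.isWF.mono inter_subset_left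
      have hne : (S ∩ Ici x).Nonempty := let ⟨s, hs, hxs⟩ := hcof x hx; ⟨s, hs, hxs⟩
      exact ⟨hwf.min hne, fun _ => ⟨(hwf.min_mem hne).1, (hwf.min_mem hne).2,
        fun s hs hxs => hwf.min_le hne ⟨hs, hxs⟩⟩⟩
    · exact ⟨x, fun h => absurd h hx⟩
  choose r hr using hceil
  have himage : r '' C = S := by
    refine (image_subset_iff.2 fun x hx => (hr x hx).1).antisymm fun s hs => ⟨s, hSC hs, ?_⟩
    exact ((hr s (hSC hs)).2.2 s hs le_rfl).antisymm (hr s (hSC hs)).2.1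
  refine ⟨r, κ, fun x hx y hy hxy => ?_, himage ▸ hSC, himage ▸ hκ, fun x hx => (hr x hx).2.1⟩
  exact (hr x hx).2.2 _ (hr y hy).1 (hxy.trans (hr y hy).2.1)

theorem IsRegularType.inter_Ici {S : Set X} {κ : Cardinal.{v}} (h : IsRegularType S κ) {c : X}
    (hc : c ∈ S) : IsRegularType (S ∩ Ici c) κ where
  isWF := h.isWF.mono inter_subset_left
  card_lt d hd :=
    (mk_le_mk_of_subset (inter_subset_inter_left _ inter_subset_left)).trans_lt (h.card_lt d hd.1)
  exists_gt T hT hlt := by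
    rcases T.eq_empty_or_nonempty with rfl | ⟨e, he⟩
    · exact ⟨c, ⟨hc, le_rfl⟩, by simp⟩
    · obtain ⟨d, hd, hTd⟩ := h.exists_gt T (hT.trans inter_subset_left) hlt
      exact ⟨d, ⟨hd, (hT he).2.trans (hTd e he).le⟩, hTd⟩

theorem exists_recurrent {α Q : Type*} [Preorder α] {le : Q → Q → Prop} {M : α → Set Q}
    (hM : Antitone M) (hpwo : (⋃ c, M c).PartiallyWellOrderedOn le) (c₀ : α) :
    ∃ c ≥ c₀, ∀ x ∈ M c, ∀ e ≥ c, ∃ y ∈ M e, le x y := by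
  by_contra! hno
  have hno' : ∀ c : Ici c₀, ∃ x ∈ M c, ∃ e : Ici c₀, c ≤ e ∧ ∀ y ∈ M e, ¬ le x y := fun c =>
    let ⟨x, hx, e, he, h⟩ := hno c c.2
    ⟨x, hx, ⟨e, le_trans (mem_Ici.1 c.2) he⟩, he, h⟩
  choose x hx e he hxe using hno'
  let c : ℕ → Ici c₀ := fun n => e^[n] ⟨c₀, le_rfl⟩
  have hsucc : ∀ n, c (n + 1) = e (c n) := fun n => Function.iterate_succ_apply' e n _
  have hmono : Monotone c := monotone_nat_of_le_succ fun n => (he (c n)).trans_eq (hsucc n).symm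
  obtain ⟨i, j, hij, h⟩ :=
    hpwo.exists_lt (f := fun n => x (c n)) fun n => mem_iUnion_of_mem _ (hx (c n))
  refine hxe (c i) _ (hM ?_ (hx (c j))) h
  rw [← hsucc]
  exact hmono (Nat.succ_le_of_lt hij)

theorem exists_isRegularSum_tail {C : Set X} {r : X → D} {κ : Cardinal.{v}} (hne : C.Nonempty)
    (hr : MonotoneOn r C) (hκ : IsRegularType (r '' C) κ)
    (hpwo : (fiber C r '' (r '' C)).PartiallyWellOrderedOn fun A B => Emb A B) :
    ∃ c ∈ r '' C, IsRegularSum (C ∩ r ⁻¹' Ici c) r κ := by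
  obtain ⟨x₀, hx₀⟩ := hne
  let M : ↥(r '' C) → Set (Set X) := fun c => fiber C r '' (r '' C ∩ Ici c.1)
  have hM : Antitone M := fun c d hcd =>
    image_mono (inter_subset_inter_right _ (Ici_subset_Ici.2 hcd))
  obtain ⟨c, -, hc⟩ := exists_recurrent hM
    (hpwo.mono (iUnion_subset fun c => image_mono inter_subset_left)) ⟨r x₀, mem_image_of_mem r hx₀⟩
  have himage : r '' (C ∩ r ⁻¹' Ici c.1) = r '' C ∩ Ici c.1 := image_inter_preimage r C _
  have hfiber : ∀ d, c.1 ≤ d → fiber (C ∩ r ⁻¹' Ici c.1) r d = fiber C r d := by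
    intro d hd
    ext x
    exact ⟨fun hx => ⟨hx.1.1, hx.2⟩, fun hx => ⟨⟨hx.1, hd.trans_eq hx.2.symm⟩, hx.2⟩⟩
  refine ⟨c, c.2, hr.mono inter_subset_left, himage ▸ hκ.inter_Ici c.2, ?_⟩
  rw [himage]
  rintro d hd e he
  obtain ⟨_, ⟨d', hd', rfl⟩, hemb⟩ := hc _ (mem_image_of_mem _ hd) ⟨e, he.1⟩ he.2
  have hcd' : c.1 ≤ d' := he.2.trans hd'.2
  exact ⟨d', ⟨hd'.1, hcd'⟩, hd'.2, by rwa [hfiber d hd.2, hfiber d' hcd']⟩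

end RegularSum

section Shuffle

open Cardinal

variable {X Y D E : Type v} [LinearOrder X] [LinearOrder Y] [LinearOrder D] [LinearOrder E]

/-- The least ordinal that does not embed into the linear order `D`. -/
noncomputable def ordBound (D : Type v) [LinearOrder D] : Ordinal.{v} :=
  sInf {μ | ¬ Emb (Iio μ) D}

theorem not_emb_Iio_ord_succ_mk : ¬ Emb (Iio (Order.succ #D).ord) D := by
  rintro ⟨f, hf⟩
  have hf : StrictMono f := hf
  have hle := lift_mk_le_lift_mk_of_injective hf.injective
  rw [mk_Iio_ordinal, card_ord, lift_lift, Cardinal.lift_le] at hle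
  exact (Order.lt_succ #D).not_ge hle

theorem lt_ordBound_iff {μ : Ordinal.{v}} : μ < ordBound D ↔ Emb (Iio μ) D := by
  refine ⟨fun h => not_not.1 (notMem_of_lt_csInf' h), fun h => ?_⟩
  by_contra! hle
  have hmem : ¬ Emb (Iio (ordBound D)) D :=
    csInf_mem (s := {μ | ¬ Emb (Iio μ) D}) ⟨_, not_emb_Iio_ord_succ_mk⟩
  exact hmem ((Emb.of_subset (Iio_subset_Iio hle)).trans h)

theorem ordBound_le_of_emb (h : Emb D E) : ordBound D ≤ ordBound E :=
  le_of_forall_lt fun _ hμ => lt_ordBound_iff.2 ((lt_ordBound_iff.1 hμ).trans h)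

/-- `J` is an increasing family of members of `𝓑` inside `I`. -/
structure IsIncreasing {D : Type*} [LT D] (𝓑 : Set (Set Y)) (I : Set Y) (J : D → Set Y) :
    Prop where
  mem : ∀ d, J d ∈ 𝓑
  subset : ∀ d, J d ⊆ I
  precedes : ∀ d e, d < e → Precedes (J d) (J e)

/-- Every member of `𝓑` contains increasing families of members of `𝓑` indexed by any ordinal
below `a`. -/
def UpBase (𝓑 : Set (Set Y)) (a : Ordinal.{v}) : Prop :=
  ∀ I ∈ 𝓑, ∀ μ < a, ∃ J : Iio μ → Set Y, IsIncreasing 𝓑 I J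

/-- The family `𝓑` of suborders, as suborders of the dual order. -/
def dualFamily {Y : Type*} (𝓑 : Set (Set Y)) : Set (Set Yᵒᵈ) :=
  {I | OrderDual.toDual ⁻¹' I ∈ 𝓑}

/-- Every member of `𝓑` contains families of members of `𝓑` ordered like any ordinal below `a` and
like the dual of any ordinal below `b`. -/
structure IsBase (𝓑 : Set (Set Y)) (a b : Ordinal.{v}) : Prop where
  up : UpBase 𝓑 a
  down : UpBase (dualFamily 𝓑) b

theorem UpBase.exists_isIncreasing [WellFoundedLT D] {𝓑 : Set (Set Y)} {a : Ordinal.{v}}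
    (h𝓑 : UpBase 𝓑 a) (hD : ordBound D ≤ a) {I : Set Y} (hI : I ∈ 𝓑) :
    ∃ J : D → Set Y, IsIncreasing 𝓑 I J := by
  let enum := Ordinal.enum (α := D) (· < ·)
  have hemb : Emb (Iio (Ordinal.type (α := D) (· < ·))) D :=
    ⟨enum, fun _ _ => (Ordinal.enum_lt_enum (r := (· < ·))).2⟩
  obtain ⟨J, hJ⟩ := h𝓑 I hI _ ((lt_ordBound_iff.2 hemb).trans_le hD)
  exact ⟨fun d => J (enum.symm d), fun _ => hJ.mem _, fun _ => hJ.subset _,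
    fun d e hde => hJ.precedes _ _ (enum.symm.map_rel_iff.2 hde)⟩

/-- Every member of `𝓑` contains a family of members of `𝓑` indexed by `T` that is increasing,
except that it may be constant along pairs of points outside `S`. -/
def CanSpread (𝓑 : Set (Set Y)) (S T : Set D) : Prop :=
  ∀ I ∈ 𝓑, ∃ h : T → Set Y, (∀ d, h d ∈ 𝓑 ∧ h d ⊆ I) ∧
    ∀ d e, d < e → Precedes (h d) (h e) ∨ (h d = h e ∧ d.1 ∉ S ∧ e.1 ∉ S)

namespace CanSpread

variable {𝓑 : Set (Set Y)} {S T T' : Set D} {a b : Ordinal.{v}}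

theorem dual (h : CanSpread 𝓑 S T) : CanSpread (dualFamily 𝓑) (dualSet S) (dualSet T) := by
  intro I hI
  obtain ⟨h, hmem, hsep⟩ := h _ hI
  exact ⟨fun d => dualSet (h d), fun d => hmem d, fun d e hde =>
    (hsep e d hde).imp Precedes.dual fun ⟨heq, he, hd⟩ => ⟨congrArg dualSet heq.symm, hd, he⟩⟩

theorem mono (h : CanSpread 𝓑 S T) (hT : T' ⊆ T) : CanSpread 𝓑 S T' := by
  intro I hI
  obtain ⟨h, hmem, hsep⟩ := h I hI
  exact ⟨h ∘ inclusion hT, fun d => hmem _, fun d e hde => hsep _ _ hde⟩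

theorem of_disjoint (h : Disjoint T S) : CanSpread 𝓑 S T := fun I hI =>
  ⟨fun _ => I, fun _ => ⟨hI, subset_rfl⟩, fun d e _ =>
    Or.inr ⟨rfl, disjoint_left.1 h d.2, disjoint_left.1 h e.2⟩⟩

theorem of_subsingleton (hT : T.Subsingleton) : CanSpread 𝓑 S T := fun I hI =>
  ⟨fun _ => I, fun _ => ⟨hI, subset_rfl⟩, fun d e hde => absurd (Subtype.ext (hT d.2 e.2)) hde.ne⟩

theorem glue {r : D → E} (h𝓑 : UpBase 𝓑 a) (hr : MonotoneOn r T) (hwf : (r '' T).IsWF)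
    (ha : ordBound ↥(r '' T) ≤ a) (h : ∀ e ∈ r '' T, CanSpread 𝓑 S (fiber T r e)) :
    CanSpread 𝓑 S T := by
  intro I hI
  have : WellFoundedLT ↥(r '' T) := ⟨hwf⟩
  obtain ⟨J, hJ⟩ := h𝓑.exists_isIncreasing ha hI
  choose g hmem hsep using fun e : ↥(r '' T) => h e e.2 (J e) (hJ.mem e)
  let q : T → ↥(r '' T) := fun d => ⟨r d, mem_image_of_mem r d.2⟩
  refine ⟨fun d => g (q d) ⟨d, d.2, rfl⟩,
    fun d => ⟨(hmem _ _).1, (hmem _ _).2.trans (hJ.subset _)⟩, fun d e hde => ?_⟩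
  rcases (hr d.2 e.2 hde.le).lt_or_eq with hlt | heq
  · exact Or.inl ((hJ.precedes (q d) (q e) hlt).mono (hmem _ _).2 (hmem _ _).2)
  · have hsame : ∀ x y : ↥(r '' T), x = y → ∀ hd he,
        Precedes (g x ⟨d, d.2, hd⟩) (g y ⟨e, e.2, he⟩) ∨
          (g x ⟨d, d.2, hd⟩ = g y ⟨e, e.2, he⟩ ∧ d.1 ∉ S ∧ e.1 ∉ S) := by
      rintro x _ rfl hd he
      exact hsep x _ _ hde
    exact hsame (q d) (q e) (Subtype.ext heq) rfl rfl

theorem of_forall_inter_Iic (h𝓑 : UpBase 𝓑 a) (ha : ordBound D ≤ a)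
    (h : ∀ y ∈ T, CanSpread 𝓑 S (T ∩ Iic y)) : CanSpread 𝓑 S T := by
  obtain ⟨r, κ, hr, hrT, hκ, hle⟩ := exists_regular_partition T
  refine glue h𝓑 hr hκ.isWF ((ordBound_le_of_emb ⟨Subtype.val, fun _ _ => id⟩).trans ha)
    fun e he => (h e (hrT he)).mono ?_
  rintro x ⟨hx, rfl⟩
  exact ⟨hx, hle x hx⟩

theorem union (h𝓑 : UpBase 𝓑 a) (ha : ordBound D ≤ a) {A B : Set D} (hAB : Precedes A B)
    (hA : CanSpread 𝓑 S A) (hB : CanSpread 𝓑 S B) : CanSpread 𝓑 S (A ∪ B) := by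
  classical
  rcases A.eq_empty_or_nonempty with rfl | ⟨x, hx⟩
  · rwa [empty_union]
  rcases B.eq_empty_or_nonempty with rfl | ⟨y, hy⟩
  · rwa [union_empty]
  let r : D → D := fun d => if d ∈ A then x else y
  have hxy : x < y := hAB x hx y hy
  have hr : MonotoneOn r (A ∪ B) := by
    intro d hd e _ hde
    by_cases heA : e ∈ A
    · have hdA : d ∈ A := hd.resolve_right fun hdB => (hAB e heA d hdB).not_ge hde
      simp only [r, if_pos hdA, if_pos heA, le_refl]
    · simp only [r, if_neg heA]
      split_ifs
      exacts [hxy.le, le_rfl]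
  have hfin : (r '' (A ∪ B)).Finite := by
    refine (toFinite {x, y}).subset (image_subset_iff.2 fun d _ => ?_)
    by_cases hd : d ∈ A <;> simp [r, hd]
  refine glue h𝓑 hr hfin.isWF ((ordBound_le_of_emb ⟨Subtype.val, fun _ _ => id⟩).trans ha) ?_
  rintro _ ⟨d, -, rfl⟩
  by_cases hd : d ∈ A
  · refine hA.mono fun e he => by_contra fun heA => ?_
    have : y = x := by
      simpa only [r, mem_preimage, mem_singleton_iff, if_pos hd, if_neg heA] using he.2
    exact hxy.ne' this
  · refine hB.mono fun e he => he.1.resolve_left fun heA => ?_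
    have : x = y := by
      simpa only [r, mem_preimage, mem_singleton_iff, if_neg hd, if_pos heA] using he.2
    exact hxy.ne this

theorem sumClosed (h𝓑 : IsBase 𝓑 a b) (ha : ordBound D ≤ a) (hb : ordBound Dᵒᵈ ≤ b) (S : Set D) :
    SumClosed (CanSpread 𝓑 S) where
  mono hAB hB := hB.mono hAB
  singleton _ := of_subsingleton subsingleton_singleton
  union := union h𝓑.up ha
  of_forall_inter_Iic := of_forall_inter_Iic h𝓑.up ha
  of_forall_inter_Ici h :=
    (of_forall_inter_Iic (S := dualSet S) h𝓑.down hb fun y hy => (h y hy).dual).dual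

end CanSpread

theorem IsBase.exists_isIncreasing {𝓑 : Set (Set Y)} {a b : Ordinal.{v}} (h𝓑 : IsBase 𝓑 a b)
    (hD : SigmaScattered D (· < ·)) (ha : ordBound D ≤ a) (hb : ordBound Dᵒᵈ ≤ b) {I : Set Y}
    (hI : I ∈ 𝓑) : ∃ J : D → Set Y, IsIncreasing 𝓑 I J := by
  obtain ⟨S, hcover, hS⟩ := hD
  have hspread : ∀ n, CanSpread 𝓑 (S n) univ := fun n =>
    (CanSpread.sumClosed h𝓑 ha hb (S n)).univ_of_scattered (fun _ => .of_disjoint) (hS n)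
  choose g hg hsep using fun n (I : 𝓑) => hspread n I I.2
  -- Stage `n` separates the points of `S n` from all others.
  let H : ℕ → D → 𝓑 := fun n => n.rec (fun _ => ⟨I, hI⟩)
    fun n H d => ⟨g n (H d) ⟨d, mem_univ d⟩, (hg n _ _).1⟩
  have hanti : ∀ d, Antitone fun n : ℕ => (H n d).1 := fun d =>
    antitone_nat_of_succ_le (f := fun n => (H n d).1) fun n =>
      (hg n (H n d) ⟨d, mem_univ d⟩).2
  have hH : ∀ d e, d < e → ∀ n,
      Precedes (H n d).1 (H n e).1 ∨ (H n d = H n e ∧ ∀ k < n, d ∉ S k ∧ e ∉ S k) := by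
    intro d e hde n
    induction n with
    | zero => exact Or.inr ⟨rfl, by simp⟩
    | succ n ih =>
      rcases ih with h | ⟨heq, hk⟩
      · exact Or.inl (h.mono (hanti d n.le_succ) (hanti e n.le_succ))
      · refine (hsep n (H n d) ⟨d, mem_univ d⟩ ⟨e, mem_univ e⟩ hde).imp (fun h => ?_)
          fun h => ⟨Subtype.ext ?_, Nat.forall_lt_succ_right.2 ⟨hk, h.2⟩⟩
        · exact h.mono subset_rfl (heq ▸ subset_rfl)
        · exact h.1.trans (heq ▸ rfl)
  choose N hN using fun d => mem_iUnion.1 (hcover.ge (mem_univ d))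
  refine ⟨fun d => H (N d + 1) d, fun d => Subtype.coe_prop _,
    fun d => hanti d (Nat.zero_le (N d + 1)), fun d e hde => ?_⟩
  let k := min (N d) (N e)
  have hk : Precedes (H (k + 1) d).1 (H (k + 1) e).1 := by
    refine (hH d e hde (k + 1)).resolve_right fun h => ?_
    have hkS := h.2 k k.lt_succ_self
    rcases min_choice (N d) (N e) with hmin | hmin
    · exact hkS.1 (show d ∈ S (min (N d) (N e)) by rw [hmin]; exact hN d)
    · exact hkS.2 (show e ∈ S (min (N d) (N e)) by rw [hmin]; exact hN e)
  exact hk.mono (hanti d (Nat.succ_le_succ (min_le_left _ _)))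
    (hanti e (Nat.succ_le_succ (min_le_right _ _)))

/-- `r` exhibits `C` as an ordered sum over a σ-scattered order `r '' C` such that every ordinal
embedding into `r '' C` is below `a`, every ordinal embedding into its dual is below `b`, and `C`
contains a base for `a` and `b` into every member of which all summands embed. -/
structure IsShuffle (C : Set X) (r : X → D) (a b : Ordinal.{v}) : Prop where
  mono : MonotoneOn r C
  sigmaScattered : SigmaScattered ↥(r '' C) (· < ·)
  ordBound_le : ordBound ↥(r '' C) ≤ a
  ordBound_dual_le : ordBound (↥(r '' C))ᵒᵈ ≤ b
  base : ∃ 𝓑 : Set (Set X), 𝓑.Nonempty ∧ IsBase 𝓑 a b ∧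
    ∀ I ∈ 𝓑, I ⊆ C ∧ ∀ d ∈ r '' C, Emb (fiber C r d) I

theorem IsShuffle.emb {C : Set X} {r : X → D} {a b : Ordinal.{v}} {C' : Set Y} {r' : Y → E}
    {a' b' : Ordinal.{v}} (h : IsShuffle C r a b) (h' : IsShuffle C' r' a' b') (ha : a ≤ a')
    (hb : b ≤ b') (hf : ∀ d ∈ r '' C, ∃ e ∈ r' '' C', Emb (fiber C r d) (fiber C' r' e)) :
    Emb C C' := by
  obtain ⟨𝓑, ⟨I, hI⟩, h𝓑, hsub⟩ := h'.base
  obtain ⟨J, hJ⟩ := h𝓑.exists_isIncreasing h.sigmaScattered (h.ordBound_le.trans ha)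
    (h.ordBound_dual_le.trans hb) hI
  refine Emb.glue h.mono (fun d => (hsub _ (hJ.mem d)).1) hJ.precedes fun d => ?_
  obtain ⟨e, he, hde⟩ := hf d d.2
  exact hde.trans ((hsub _ (hJ.mem d)).2 e he)

/-- The inverse images under `ρ` of the nontrivial open intervals with endpoints in `T`. -/
def intervalBase {X D : Type*} [Preorder D] (ρ : X → D) (T : Set D) : Set (Set X) :=
  {I | ∃ d ∈ T, ∃ e ∈ T, d < e ∧ I = ρ ⁻¹' Ioo d e}

theorem dualFamily_intervalBase {X D : Type*} [Preorder D] (ρ : X → D) (T : Set D) :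
    dualFamily (intervalBase ρ T) =
      intervalBase (OrderDual.toDual ∘ ρ ∘ OrderDual.ofDual) (dualSet T) := by
  ext I
  constructor
  · rintro ⟨d, hd, e, he, hde, hI⟩
    exact ⟨e, he, d, hd, hde, hI.trans (by ext x; exact and_comm)⟩
  · rintro ⟨e, he, d, hd, hde, hI⟩
    exact ⟨d, hd, e, he, hde, hI.trans (by ext x; exact and_comm)⟩

theorem upBase_intervalBase {ρ : X → D} {T : Set D} {a : Ordinal.{v}} (hρ : Monotone ρ)
    (hdense : ∀ x ∈ T, ∀ y ∈ T, x < y → ∃ z ∈ T, x < z ∧ z < y)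
    (ha : ∀ d ∈ T, ∀ e ∈ T, d < e → a ≤ ordBound ↥(T ∩ Ioo d e)) :
    UpBase (intervalBase ρ T) a := by
  classical
  rintro _ ⟨d, hd, e, he, hde, rfl⟩ μ hμ
  obtain ⟨m, hmT, hdm, hme⟩ := hdense d hd e he hde
  obtain ⟨g, hg⟩ := lt_ordBound_iff.1 (hμ.trans_le (ha d hd m hmT hdm))
  have hg : StrictMono g := hg
  let u : Iio μ → D := fun ξ => if h : Order.succ ξ.1 < μ then g ⟨Order.succ ξ.1, h⟩ else m
  have hu : ∀ ξ, u ξ ∈ T ∧ g ξ < u ξ ∧ u ξ ≤ m := by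
    intro ξ
    by_cases h : Order.succ ξ.1 < μ
    · simp only [u, dif_pos h]
      exact ⟨(g _).2.1, hg (Order.lt_succ ξ.1), (g _).2.2.2.le⟩
    · simp only [u, dif_neg h]
      exact ⟨hmT, (g ξ).2.2.2, le_rfl⟩
  have hug : ∀ ξ η, ξ < η → u ξ ≤ g η := by
    intro ξ η hξη
    have hle : Order.succ ξ.1 ≤ η.1 := Order.succ_le_of_lt hξη
    simp only [u, dif_pos (hle.trans_lt η.2)]
    exact hg.monotone hle
  refine ⟨fun ξ => ρ ⁻¹' Ioo (g ξ) (u ξ),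
    fun ξ => ⟨_, (g ξ).2.1, _, (hu ξ).1, (hu ξ).2.1, rfl⟩,
    fun ξ => preimage_mono (Ioo_subset_Ioo (g ξ).2.2.1.le ((hu ξ).2.2.trans hme.le)), ?_⟩
  intro ξ η hξη x hx y hy
  exact hρ.reflect_lt ((hx.2.trans_le (hug ξ η hξη)).trans hy.1)

theorem preimage_Ioo_subset {C : Set X} {ρ : X → D} (hρ : Monotone ρ) (hC : C.OrdConnected)
    {d e : D} (hd : d ∈ ρ '' C) (he : e ∈ ρ '' C) : ρ ⁻¹' Ioo d e ⊆ C := by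
  obtain ⟨s, hs, rfl⟩ := hd
  obtain ⟨t, ht, rfl⟩ := he
  exact fun x hx => hC.out hs ht ⟨(hρ.reflect_lt hx.1).le, (hρ.reflect_lt hx.2).le⟩

theorem isShuffle_of_homogeneous {C : Set X} {ρ : X → D} {a b : Ordinal.{v}} (hρ : Monotone ρ)
    (hC : C.OrdConnected) (hnt : (ρ '' C).Nontrivial)
    (hdense : ∀ x ∈ ρ '' C, ∀ y ∈ ρ '' C, x < y → ∃ z ∈ ρ '' C, x < z ∧ z < y)
    (hσ : SigmaScattered ↥(ρ '' C) (· < ·)) (ha : ordBound ↥(ρ '' C) ≤ a)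
    (hb : ordBound (↥(ρ '' C))ᵒᵈ ≤ b)
    (ha' : ∀ d ∈ ρ '' C, ∀ e ∈ ρ '' C, d < e → a ≤ ordBound ↥(ρ '' C ∩ Ioo d e))
    (hb' : ∀ d ∈ ρ '' C, ∀ e ∈ ρ '' C, d < e → b ≤ ordBound (↥(ρ '' C ∩ Ioo d e))ᵒᵈ)
    (hemb : ∀ x ∈ ρ '' C, ∀ d ∈ ρ '' C, ∀ e ∈ ρ '' C, d < e →
      Emb (fiber C ρ x) (ρ ⁻¹' Ioo d e)) : IsShuffle C ρ a b := by
  obtain ⟨x, hx, y, hy, hxy⟩ := hnt.exists_lt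
  refine ⟨hρ.monotoneOn C, hσ, ha, hb, intervalBase ρ (ρ '' C), ⟨_, x, hx, y, hy, hxy, rfl⟩,
    ⟨upBase_intervalBase hρ hdense ha', ?_⟩, ?_⟩
  · rw [dualFamily_intervalBase]
    refine upBase_intervalBase hρ.dual (fun x hx y hy hxy => ?_) fun d hd e he hde =>
      (hb' e he d hd hde).trans (ordBound_le_of_emb ⟨fun x => ⟨x.1, x.2.1, x.2.2.2, x.2.2.1⟩, ?_⟩)
    · obtain ⟨z, hz, hyz, hzx⟩ := hdense y hy x hx hxy
      exact ⟨z, hz, hzx, hyz⟩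
    · exact fun _ _ => id
  · rintro _ ⟨d, hd, e, he, hde, rfl⟩
    exact ⟨preimage_Ioo_subset hρ hC hd he, fun x hx => hemb x hx d hd e he hde⟩

end Shuffle

section Constructions

open Cardinal

/-- The operations that build suborders from simpler ones: the two trivial suborders, binary sums,
sums over regular cardinals and their duals, and shuffles. -/
inductive Kind
  | empty
  | single
  | sum
  | up
  | down
  | shuffle

instance : Finite Kind := by
  refine .of_surjective ![Kind.empty, .single, .sum, .up, .down, .shuffle] fun k => ?_
  cases k
  exacts [⟨0, rfl⟩, ⟨1, rfl⟩, ⟨2, rfl⟩, ⟨3, rfl⟩, ⟨4, rfl⟩, ⟨5, rfl⟩]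

/-- `Step k a b 𝓕 C` says that `C` arises by the operation `k` from the members of `𝓕 false` and
`𝓕 true`. The ordinals `a` and `b` are the parameters of the operation; larger parameters allow for
more embeddings into `C`. Only binary sums distinguish between the two families. -/
inductive Step {X : Type v} [LinearOrder X] :
    Kind → Ordinal.{v} → Ordinal.{v} → (Bool → Set (Set X)) → Set X → Prop
  | empty : Step .empty 0 0 (fun _ => ∅) ∅
  | single (x : X) : Step .single 0 0 (fun _ => ∅) {x}
  | sum {A B : Set X} (h : Precedes A B) :
      Step .sum 0 0 (fun i => {bif i then B else A}) (A ∪ B)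
  | up {C : Set X} {r : X → X} {κ : Cardinal.{v}} (h : IsRegularSum C r κ) :
      Step .up κ.ord 0 (fun _ => fiber C r '' (r '' C)) C
  | down {C : Set X} {r : X → X} {κ : Cardinal.{v}}
      (h : IsRegularSum (dualSet C) (OrderDual.toDual ∘ r ∘ OrderDual.ofDual) κ) :
      Step .down κ.ord 0 (fun _ => fiber C r '' (r '' C)) C
  | shuffle {C : Set X} {r : X → X} {a b : Ordinal.{v}} (h : IsShuffle C r a b) :
      Step .shuffle a b (fun _ => fiber C r '' (r '' C)) C

theorem Step.subset {X : Type v} [LinearOrder X] {k : Kind} {a b : Ordinal.{v}}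
    {𝓕 : Bool → Set (Set X)} {C : Set X} (h : Step k a b 𝓕 C) (i : Bool) :
    ∀ F ∈ 𝓕 i, F ⊆ C := by
  cases h with
  | empty => simp
  | single => simp
  | sum => cases i <;> simp
  | up | down | shuffle =>
    rintro _ ⟨d, -, rfl⟩
    exact inter_subset_left

theorem Step.emb {X Y : Type v} [LinearOrder X] [LinearOrder Y] {k : Kind}
    {a b a' b' : Ordinal.{v}} {𝓕 : Bool → Set (Set X)} {𝓕' : Bool → Set (Set Y)} {C : Set X}
    {C' : Set Y} (h : Step k a b 𝓕 C) (h' : Step k a' b' 𝓕' C') (ha : a ≤ a') (hb : b ≤ b')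
    (hf : ∀ i, ∀ F ∈ 𝓕 i, ∃ F' ∈ 𝓕' i, Emb F F') : Emb C C' := by
  cases h with
  | empty => exact ⟨fun x => absurd x.2 (notMem_empty x.1), fun x => absurd x.2 (notMem_empty x.1)⟩
  | single x =>
    cases h' with
    | single y =>
      exact ⟨fun _ => ⟨y, rfl⟩, fun s t hst => absurd (Subsingleton.elim s t) hst.ne⟩
  | sum h =>
    cases h' with
    | sum h' => exact Emb.union h h' (by simpa using hf false) (by simpa using hf true)
  | up h =>
    cases h' with
    | up h' =>
      exact h.emb h' (ord_le_ord.1 ha) fun d hd => by simpa using hf true _ (mem_image_of_mem _ hd)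
  | down h =>
    cases h' with
    | down h' =>
      refine Emb.dual (h.emb h' (ord_le_ord.1 ha) fun d hd => ?_)
      obtain ⟨_, ⟨e, he, rfl⟩, hde⟩ := hf true _ (mem_image_of_mem _ hd)
      exact ⟨e, he, hde.dualSet⟩
  | shuffle h =>
    cases h' with
    | shuffle h' =>
      exact h.emb h' ha hb fun d hd => by simpa using hf true _ (mem_image_of_mem _ hd)

/-- `C` is built by transfinitely iterating the operations `Step`, in at most `α` rounds. -/
inductive ConstructibleIn {X : Type v} [LinearOrder X] : Ordinal.{v} → Set X → Prop
  | of_step {α : Ordinal.{v}} {k : Kind} {a b : Ordinal.{v}} {𝓕 : Bool → Set (Set X)} {C : Set X}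
      {β : Bool → Set X → Ordinal.{v}} (h : Step k a b 𝓕 C) (hβ : ∀ i, ∀ F ∈ 𝓕 i, β i F < α)
      (h𝓕 : ∀ i, ∀ F ∈ 𝓕 i, ConstructibleIn (β i F) F) : ConstructibleIn α C

/-- `C` is built by transfinitely iterating the operations `Step`. -/
def Constructible {X : Type v} [LinearOrder X] (C : Set X) : Prop :=
  ∃ α, ConstructibleIn α C

theorem Step.constructible {X : Type v} [LinearOrder X] {k : Kind} {a b : Ordinal.{v}}
    {𝓕 : Bool → Set (Set X)} {C : Set X} (h : Step k a b 𝓕 C)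
    (h𝓕 : ∀ i, ∀ F ∈ 𝓕 i, Constructible F) : Constructible C := by
  choose! β hβ using h𝓕
  exact ⟨Order.succ (⨆ p : Bool × Set X, β p.1 p.2), .of_step h (fun i F _ =>
    Order.lt_succ_of_le (Ordinal.le_iSup (fun p : Bool × Set X => β p.1 p.2) (i, F))) hβ⟩

/-- A suborder of an arbitrary linear order together with a bound on the length of its
construction: these are the points to which the theory of bad arrays is applied. -/
structure Built : Type (v + 1) where
  carrier : Type v
  [order : LinearOrder carrier]
  set : Set carrier
  rank : Ordinal.{v}
  constructibleIn : ConstructibleIn rank set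

namespace Built

attribute [instance] Built.order

instance : Preorder Built.{v} where
  le p q := Emb p.set q.set
  le_refl p := Emb.refl p.set
  le_trans _ _ _ := Emb.trans

theorem exists_step (p : Built.{v}) : ∃ (k : Kind) (a b : Ordinal.{v})
    (𝓕 : Bool → Set (Set p.carrier)), Step k a b 𝓕 p.set ∧
      ∀ i, ∀ F ∈ 𝓕 i, ∃ β < p.rank, ConstructibleIn β F := by
  obtain ⟨X, C, α, hC⟩ := p
  cases hC with
  | of_step h hβ h𝓕 => exact ⟨_, _, _, _, h, fun i F hF => ⟨_, hβ i F hF, h𝓕 i F hF⟩⟩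

theorem wellQuasiOrdered : WellQuasiOrdered (α := Built.{v}) (· ≤ ·) := by
  choose k a b 𝓕 hstep h𝓕 using exists_step
  let children (i : Bool) (p : Built.{v}) : Set Built.{v} :=
    {p' | ∃ F ∈ 𝓕 p i, ∃ β < p.rank, ∃ h : ConstructibleIn β F, p' = ⟨p.carrier, F, β, h⟩}
  refine wellQuasiOrdered_of_children (ρ := rank) (kind := k) (ℓ := ![a, b]) (Ch := children)
    ?_ fun p q hk hℓ hCh => ?_
  · rintro i p _ ⟨F, hF, β, hβ, h, rfl⟩
    exact ⟨hβ, Emb.of_subset ((hstep p).subset i F hF)⟩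
  · refine (hstep p).emb (hk ▸ hstep q) (hℓ 0) (hℓ 1) fun i F hF => ?_
    obtain ⟨β, hβ, h⟩ := h𝓕 p i F hF
    obtain ⟨_, ⟨F', hF', _, _, _, rfl⟩, hle⟩ := hCh i _ ⟨F, hF, β, hβ, h, rfl⟩
    exact ⟨F', hF', hle⟩

end Built

theorem wellQuasiOrdered_emb_of_constructible {N : Type*} {X : N → Type v} [∀ n, LinearOrder (X n)]
    {C : ∀ n, Set (X n)} (h : ∀ n, Constructible (C n)) :
    WellQuasiOrdered fun m n => Emb (C m) (C n) := by
  choose α hα using h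
  exact fun u => Built.wellQuasiOrdered fun n => ⟨X (u n), C (u n), α (u n), hα (u n)⟩

end Constructions

section Laver

variable {X : Type v} [LinearOrder X]

theorem exists_regularSum_tail_of_forall_inter_Iic {P : Set X → Prop} {C : Set X} (hne : C.Nonempty)
    (hC : C.OrdConnected) (hP : ∀ y ∈ C, ∀ T ⊆ C ∩ Iic y, T.OrdConnected → P T)
    (hpwo : {T | P T}.PartiallyWellOrderedOn fun A B => Emb A B) :
    ∃ (A B : Set X) (r : X → X) (κ : Cardinal.{v}), A ∪ B = C ∧ Precedes A B ∧ P A ∧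
      IsRegularSum B r κ ∧ ∀ d ∈ r '' B, P (fiber B r d) := by
  obtain ⟨r, κ, hr, hrC, hκ, hle⟩ := exists_regular_partition C
  have hfiber : ∀ d ∈ r '' C, P (fiber C r d) := fun d hd => by
    refine hP d (hrC hd) _ (fun x hx => ⟨hx.1, (hle x hx.1).trans_eq hx.2⟩) ?_
    exact ordConnected_inter_preimage hr hC ordConnected_singleton
  obtain ⟨c, hc, htail⟩ :=
    exists_isRegularSum_tail hne hr hκ (hpwo.mono (image_subset_iff.2 hfiber))
  refine ⟨C ∩ r ⁻¹' Iio c, C ∩ r ⁻¹' Ici c, r, κ, ?_, ?_, ?_, htail, ?_⟩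
  · rw [← inter_union_distrib_left, ← preimage_union, Iio_union_Ici, preimage_univ, inter_univ]
  · exact fun x hx y hy => hr.reflect_lt hx.1 hy.1 (lt_of_lt_of_le hx.2 hy.2)
  · refine hP c (hrC hc) _ (fun x hx => ⟨hx.1, (hle x hx.1).trans (le_of_lt hx.2)⟩) ?_
    exact ordConnected_inter_preimage hr hC ordConnected_Iio
  · rintro d ⟨x, hx, rfl⟩
    refine hP (r x) (hrC (mem_image_of_mem r hx.1)) _
      (fun y hy => ⟨hy.1.1, (hle y hy.1.1).trans_eq hy.2⟩) ?_
    exact ordConnected_inter_preimage htail.mono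
      (ordConnected_inter_preimage hr hC ordConnected_Ici) ordConnected_singleton

/-- Every convex part of `C` is constructible. -/
def HereditarilyConstructible (C : Set X) : Prop :=
  ∀ D ⊆ C, D.OrdConnected → Constructible D

theorem Constructible.union {A B : Set X} (h : Precedes A B) (hA : Constructible A)
    (hB : Constructible B) : Constructible (A ∪ B) :=
  (Step.sum h).constructible fun i => by cases i <;> simpa

namespace HereditarilyConstructible

variable {A B C : Set X}

theorem of_subsingleton (hC : C.Subsingleton) : HereditarilyConstructible C := by
  intro D hD _
  rcases (hC.anti hD).eq_empty_or_singleton with rfl | ⟨x, rfl⟩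
  · exact Step.empty.constructible fun _ => by simp
  · exact (Step.single x).constructible fun _ => by simp

theorem union (h : Precedes A B) (hA : HereditarilyConstructible A)
    (hB : HereditarilyConstructible B) : HereditarilyConstructible (A ∪ B) := by
  intro D hD hconn
  rw [← inter_eq_left.2 hD, inter_union_distrib_left]
  refine Constructible.union (h.mono inter_subset_right inter_subset_right)
    (hA _ inter_subset_right ⟨fun x hx y hy z hz => ?_⟩)
    (hB _ inter_subset_right ⟨fun x hx y hy z hz => ?_⟩)
  · have hzD := hconn.out hx.1 hy.1 hz
    exact ⟨hzD, (hD hzD).resolve_right fun hzB => (h y hy.2 z hzB).not_ge hz.2⟩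
  · have hzD := hconn.out hx.1 hy.1 hz
    exact ⟨hzD, (hD hzD).resolve_left fun hzA => (h z hzA x hx.2).not_ge hz.1⟩

theorem of_forall_inter_Iic (h : ∀ y ∈ C, HereditarilyConstructible (C ∩ Iic y)) :
    HereditarilyConstructible C := by
  intro D hD hconn
  rcases D.eq_empty_or_nonempty with rfl | hne
  · exact Step.empty.constructible fun _ => by simp
  obtain ⟨A, B, r, κ, rfl, hAB, hA, hB, hfiber⟩ :=
    exists_regularSum_tail_of_forall_inter_Iic (P := Constructible) hne hconn
      (fun y hy T hT => h y (hD hy) T (hT.trans (inter_subset_inter_left _ hD)))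
      (wellQuasiOrdered_emb_of_constructible Subtype.prop)
  exact hA.union hAB ((Step.up hB).constructible fun _ => forall_mem_image.2 hfiber)

theorem of_forall_inter_Ici (h : ∀ y ∈ C, HereditarilyConstructible (C ∩ Ici y)) :
    HereditarilyConstructible C := by
  intro D hD hconn
  rcases D.eq_empty_or_nonempty with rfl | hne
  · exact Step.empty.constructible fun _ => by simp
  obtain ⟨A, B, r, κ, hDAB, hAB, hA, hB, hfiber⟩ :=
    exists_regularSum_tail_of_forall_inter_Iic (X := Xᵒᵈ) (C := dualSet D)
      (P := fun T => Constructible (OrderDual.toDual ⁻¹' T)) hne hconn.dual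
      (fun y hy T hT hconn => h y (hD hy) _ (fun x hx => ⟨hD (hT hx).1, (hT hx).2⟩) hconn.dual)
      fun F =>
        let ⟨i, j, hij, h⟩ := wellQuasiOrdered_emb_of_constructible (fun n => (F n).2) id
        ⟨i, j, hij, h.dual⟩
  obtain rfl : OrderDual.toDual ⁻¹' B ∪ OrderDual.toDual ⁻¹' A = D := (union_comm _ _).trans hDAB
  refine Constructible.union (fun b hb a ha => hAB a ha b hb) ?_ hA
  exact (Step.down (r := OrderDual.ofDual ∘ r ∘ OrderDual.toDual) hB).constructible
    fun _ => forall_mem_image.2 hfiber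

theorem sumClosed : SumClosed (HereditarilyConstructible (X := X)) where
  mono hAB hB D hD := hB D (hD.trans hAB)
  singleton _ := of_subsingleton subsingleton_singleton
  union := union
  of_forall_inter_Iic := of_forall_inter_Iic
  of_forall_inter_Ici := of_forall_inter_Ici

end HereditarilyConstructible

/-- Between `d₀` and `e₀`, the suborder `R` embeds the same ordinals and the same duals of ordinals
as each of its open intervals, and the fibers of `ρ` embed into the inverse images of all these
intervals. -/
structure HomogeneousRetract (R : Set X) (ρ : X → X) (d₀ e₀ : X) (a b : Ordinal.{v}) : Prop where
  ordBound_eq : ∀ d ∈ R, ∀ e ∈ R, d₀ ≤ d → d < e → e ≤ e₀ → ordBound ↥(R ∩ Ioo d e) = a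
  ordBound_dual_eq : ∀ d ∈ R, ∀ e ∈ R, d₀ ≤ d → d < e → e ≤ e₀ →
    ordBound (↥(R ∩ Ioo d e))ᵒᵈ = b
  emb : ∀ x ∈ R ∩ Ioo d₀ e₀, ∀ d ∈ R, ∀ e ∈ R, d₀ ≤ d → d < e → e ≤ e₀ →
    Emb (fiber univ ρ x) (ρ ⁻¹' Ioo d e)

theorem exists_homogeneousRetract {R : Set X} {ρ : X → X} (hR : R.Nontrivial)
    (hpwo : (fiber univ ρ '' R).PartiallyWellOrderedOn fun A B => Emb A B) :
    ∃ d₀ ∈ R, ∃ e₀ ∈ R, d₀ < e₀ ∧ ∃ a b, HomogeneousRetract R ρ d₀ e₀ a b := by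
  let W := {p : R × Rᵒᵈ // p.1 < OrderDual.ofDual p.2}
  let window (p : W) : Set X := R ∩ Ioo p.1.1.1 (OrderDual.ofDual p.1.2).1
  have hwindow : Antitone window := fun p q hpq =>
    inter_subset_inter_right _ (Ioo_subset_Ioo hpq.1 hpq.2)
  let bounds (p : W) : Ordinal.{v} × Ordinal.{v} := (ordBound (window p), ordBound (window p)ᵒᵈ)
  have hbounds : Antitone bounds := fun p q hpq =>
    have hemb := Emb.of_subset (hwindow hpq)
    ⟨ordBound_le_of_emb hemb, ordBound_le_of_emb hemb.dual⟩
  obtain ⟨x, hx, y, hy, hxy⟩ := hR.exists_lt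
  obtain ⟨p, -, hp⟩ := exists_minimalFor_of_wellFoundedLT (fun _ : W => True) bounds
    ⟨⟨(⟨x, hx⟩, OrderDual.toDual ⟨y, hy⟩), hxy⟩, trivial⟩
  obtain ⟨q, hpq, hq⟩ := exists_recurrent (M := fun p => fiber univ ρ '' window p)
    (fun _ _ h => image_mono (hwindow h))
    (hpwo.mono (iUnion_subset fun _ => image_mono inter_subset_left)) p
  have hconst : ∀ s ≥ q, bounds s = bounds p := fun s hs =>
    (hbounds (hpq.trans hs)).antisymm (hp trivial (hbounds (hpq.trans hs)))
  refine ⟨_, q.1.1.2, _, (OrderDual.ofDual q.1.2).2, q.2, (bounds p).1, (bounds p).2,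
    fun d hd e he hd₀ hde he₀ => ?_, fun d hd e he hd₀ hde he₀ => ?_,
    fun x hx d hd e he hd₀ hde he₀ => ?_⟩
  · exact congrArg Prod.fst (hconst ⟨(⟨d, hd⟩, OrderDual.toDual ⟨e, he⟩), hde⟩ ⟨hd₀, he₀⟩)
  · exact congrArg Prod.snd (hconst ⟨(⟨d, hd⟩, OrderDual.toDual ⟨e, he⟩), hde⟩ ⟨hd₀, he₀⟩)
  · obtain ⟨_, ⟨z, hz, rfl⟩, hemb⟩ := hq _ (mem_image_of_mem _ hx)
      ⟨(⟨d, hd⟩, OrderDual.toDual ⟨e, he⟩), hde⟩ ⟨hd₀, he₀⟩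
    exact hemb.trans (Emb.of_subset fun t ht => by rw [mem_preimage, ht.2]; exact hz.2)

namespace DenseRetract

variable {R C : Set X} {ρ : X → X} {d₀ e₀ : X} {a b : Ordinal.{v}}

theorem isShuffle (hρ : DenseRetract R ρ) (hom : HomogeneousRetract R ρ d₀ e₀ a b) (hd₀ : d₀ ∈ R)
    (he₀ : e₀ ∈ R) (hX : SigmaScattered X (· < ·)) (hC : C.OrdConnected)
    (hsub : C ⊆ ρ ⁻¹' Ioo d₀ e₀) (hnt : (ρ '' C).Nontrivial) : IsShuffle C ρ a b := by
  have himage : ρ '' C ⊆ R ∩ Ioo d₀ e₀ := by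
    rintro _ ⟨x, hx, rfl⟩
    exact ⟨hρ.mem x, hsub hx⟩
  have hconvex : ∀ d ∈ ρ '' C, ∀ e ∈ ρ '' C, R ∩ Ioo d e ⊆ ρ '' C ∩ Ioo d e := fun d hd e he z hz =>
    ⟨⟨z, preimage_Ioo_subset hρ.mono hC hd he (by rw [mem_preimage, hρ.fix z hz.1]; exact hz.2),
      hρ.fix z hz.1⟩, hz.2⟩
  have h₀ : d₀ < e₀ := let ⟨x, hx, _⟩ := hnt; (himage hx).2.1.trans (himage hx).2.2
  refine isShuffle_of_homogeneous hρ.mono hC hnt (fun x hx y hy hxy => ?_)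
    (hX.of_emb ⟨Subtype.val, fun _ _ => id⟩) ?_ ?_ (fun d hd e he hde => ?_)
    (fun d hd e he hde => ?_) fun x hx d hd e he hde => ?_
  · obtain ⟨z, hz, hxyz⟩ := hρ.dense x (himage hx).1 y (himage hy).1 hxy
    exact ⟨z, (hconvex x hx y hy ⟨hz, hxyz⟩).1, hxyz⟩
  · rw [← hom.ordBound_eq d₀ hd₀ e₀ he₀ le_rfl h₀ le_rfl]
    exact ordBound_le_of_emb (Emb.of_subset himage)
  · rw [← hom.ordBound_dual_eq d₀ hd₀ e₀ he₀ le_rfl h₀ le_rfl]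
    exact ordBound_le_of_emb (Emb.of_subset himage).dual
  · rw [← hom.ordBound_eq d (himage hd).1 e (himage he).1 (himage hd).2.1.le hde (himage he).2.2.le]
    exact ordBound_le_of_emb (Emb.of_subset (hconvex d hd e he))
  · rw [← hom.ordBound_dual_eq d (himage hd).1 e (himage he).1 (himage hd).2.1.le hde
      (himage he).2.2.le]
    exact ordBound_le_of_emb (Emb.of_subset (hconvex d hd e he)).dual
  · exact (Emb.of_subset (inter_subset_inter_left _ (subset_univ C))).trans
      (hom.emb x (himage hx) d (himage hd).1 e (himage he).1 (himage hd).2.1.le hde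
        (himage he).2.2.le)

theorem hereditarilyConstructible_preimage_Ioo (hρ : DenseRetract R ρ)
    (hom : HomogeneousRetract R ρ d₀ e₀ a b) (hd₀ : d₀ ∈ R) (he₀ : e₀ ∈ R)
    (hX : SigmaScattered X (· < ·)) (hfiber : ∀ d, HereditarilyConstructible (ρ ⁻¹' {d})) :
    HereditarilyConstructible (ρ ⁻¹' Ioo d₀ e₀) := by
  intro C hC hconn
  rcases (ρ '' C).subsingleton_or_nontrivial with hs | hnt
  · rcases hs.eq_empty_or_singleton with hempty | ⟨d, hd⟩
    · exact HereditarilyConstructible.of_subsingleton subsingleton_empty C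
        (image_eq_empty.1 hempty).subset hconn
    · exact hfiber d C (image_subset_iff.1 hd.subset) hconn
  · refine (Step.shuffle (hρ.isShuffle hom hd₀ he₀ hX hconn hC hnt)).constructible fun _ => ?_
    rintro _ ⟨d, -, rfl⟩
    exact hfiber d _ inter_subset_right
      (ordConnected_inter_preimage (hρ.mono.monotoneOn C) hconn ordConnected_singleton)

end DenseRetract

theorem SumClosed.Icc_of_preimage {P : Set X → Prop} (hP : SumClosed P) {R : Set X} {ρ : X → X}
    (hρ : DenseRetract R ρ) (hfiber : ∀ d, P (ρ ⁻¹' {d})) {d e : X} (hd : d ∈ R) (he : e ∈ R)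
    (hde : d < e) (h : P (ρ ⁻¹' Ioo d e)) : P (Icc d e) := by
  have hpre : Icc d e ⊆ ρ ⁻¹' {d} ∪ ρ ⁻¹' Ioo d e ∪ ρ ⁻¹' {e} := by
    intro x hx
    have hdx : d ≤ ρ x := (hρ.fix d hd).symm.trans_le (hρ.mono hx.1)
    have hxe : ρ x ≤ e := (hρ.mono hx.2).trans_eq (hρ.fix e he)
    rcases hdx.eq_or_lt with hdx | hdx
    · exact Or.inl (Or.inl hdx.symm)
    · exact hxe.eq_or_lt.elim Or.inr fun hxe => Or.inl (Or.inr ⟨hdx, hxe⟩)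
  refine hP.mono hpre (hP.union ?_ (hP.union ?_ (hfiber d) h) (hfiber e))
  · rintro x (hx | hx) y rfl
    · exact hρ.mono.reflect_lt (lt_of_eq_of_lt hx hde)
    · exact hρ.mono.reflect_lt hx.2
  · rintro x rfl y hy
    exact hρ.mono.reflect_lt hy.1

theorem SigmaScattered.hereditarilyConstructible (hX : SigmaScattered X (· < ·)) :
    HereditarilyConstructible (univ : Set X) := by
  by_contra hnot
  obtain ⟨R, ρ, hρ, hR, hIcc, hfiber⟩ :=
    HereditarilyConstructible.sumClosed.exists_denseRetract hnot
  have hpwo : (fiber univ ρ '' R).PartiallyWellOrderedOn fun A B => Emb A B := by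
    refine wellQuasiOrdered_emb_of_constructible ?_
    rintro ⟨_, d, -, rfl⟩
    exact hfiber d _ inter_subset_right
      (ordConnected_inter_preimage (hρ.mono.monotoneOn univ) ordConnected_univ
        ordConnected_singleton)
  obtain ⟨d, hd, e, he, hde, a, b, hom⟩ := exists_homogeneousRetract hR hpwo
  exact hIcc d hd e he hde (HereditarilyConstructible.sumClosed.Icc_of_preimage hρ hfiber hd he hde
    (hρ.hereditarilyConstructible_preimage_Ioo hom hd he hX hfiber))

theorem wellQuasiOrdered_embedsIn_of_sigmaScattered {N : Type*} {X : N → Type v}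
    [∀ i, LinearOrder (X i)] (h : ∀ i, SigmaScattered (X i) (· < ·)) :
    WellQuasiOrdered fun i j : N =>
      EmbedsIn ((· < ·) : X i → X i → Prop) ((· < ·) : X j → X j → Prop) := by
  have hconstr : ∀ i, Constructible (univ : Set (X i)) := fun i =>
    (h i).hereditarilyConstructible univ subset_rfl ordConnected_univ
  intro u
  obtain ⟨m, n, hmn, hemb⟩ := wellQuasiOrdered_emb_of_constructible hconstr u
  have hsub : ∀ i, Emb (X i) (univ : Set (X i)) := fun i =>
    ⟨fun x => ⟨x, mem_univ x⟩, fun _ _ => id⟩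
  exact ⟨m, n, hmn, emb_iff_embedsIn.1
    (((hsub _).trans hemb).trans ⟨Subtype.val, fun _ _ => id⟩)⟩

end Laver

section Reversibility

theorem injective_of_surjective_of_le {N : Type*} [Preorder N] [WellQuasiOrderedLE N]
    (hfin : ∀ J : Set N, (∀ i ∈ J, ∀ j ∈ J, i ≤ j) → J.Finite) {g : N → N}
    (hg : Function.Surjective g) (hle : ∀ i, i ≤ g i) : Function.Injective g := by
  obtain ⟨σ, hσ⟩ := hg.hasRightInverse
  suffices hper : ∀ i, i ∈ Function.periodicPts g by
    have hbij := Function.bijOn_periodicPts g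
    rw [eq_univ_of_forall hper] at hbij
    exact injOn_univ.1 hbij.injOn
  intro i
  by_contra hi
  let c : ℕ → N := fun n => σ^[n] i
  have hgc : ∀ n, g^[n] (c n) = i := fun n => hσ.iterate n i
  have hne : ∀ m n, m < n → c m ≠ c n := fun m n hmn heq => by
    refine hi ⟨n - m, Nat.sub_pos_of_lt hmn, ?_⟩
    calc g^[n - m] i = g^[n - m] (g^[m] (c n)) := by rw [← heq, hgc]
      _ = i := by rw [← Function.iterate_add_apply, Nat.sub_add_cancel hmn.le, hgc]
  have hinj : Function.Injective c := fun m n heq => by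
    rcases lt_trichotomy m n with h | h | h
    exacts [(hne m n h heq).elim, h, (hne n m h heq.symm).elim]
  have hanti : Antitone c := antitone_nat_of_succ_le fun n => by
    simp only [c, Function.iterate_succ_apply']
    exact (hle _).trans_eq (hσ _)
  obtain ⟨φ, hφ⟩ := (wellQuasiOrdered_le (α := N)).exists_monotone_subseq c
  refine infinite_range_of_injective (hinj.comp φ.injective) (hfin _ ?_)
  rintro _ ⟨m, rfl⟩ _ ⟨n, rfl⟩
  rcases le_total m n with h | h
  · exact hφ m n h
  · exact hanti (φ.monotone h)

variable {α β γ : Type*} {r : α → α → Prop} {s : β → β → Prop} {t : γ → γ → Prop}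

theorem EmbedsIn.refl (r : α → α → Prop) : EmbedsIn r r :=
  ⟨id, Function.injective_id, fun _ _ => Iff.rfl⟩

theorem EmbedsIn.trans (h : EmbedsIn r s) (h' : EmbedsIn s t) : EmbedsIn r t :=
  let ⟨f, hf, hrs⟩ := h
  let ⟨g, hg, hst⟩ := h'
  ⟨g ∘ f, hg.comp hf, fun x y => (hrs x y).trans (hst _ _)⟩

variable {I : Type*} {X : I → Type*} {R : ∀ i, X i → X i → Prop}

theorem unionRel_mk_iff {i : I} {x y : X i} : unionRel R ⟨i, x⟩ ⟨i, y⟩ ↔ R i x y :=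
  ⟨fun ⟨_, h⟩ => h, fun h => ⟨rfl, h⟩⟩

theorem IsHom.exists_component {f : (Σ i, X i) → Σ i, X i} (hf : IsHom (unionRel R) (unionRel R) f)
    {i : I} (hi : ∀ x y, Relation.EqvGen (R i) x y) :
    ∃ (j : I) (φ : X i → X j), (∀ x, f ⟨i, x⟩ = ⟨j, φ x⟩) ∧ (IsEmpty (X i) → j = i) := by
  rcases isEmpty_or_nonempty (X i) with hempty | ⟨⟨x₀⟩⟩
  · exact ⟨i, id, isEmptyElim, fun _ => rfl⟩
  have hfst : ∀ x, (f ⟨i, x⟩).1 = (f ⟨i, x₀⟩).1 := fun x => by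
    induction hi x x₀ with
    | rel x y h => exact (hf _ _ (unionRel_mk_iff.2 h)).1
    | refl => rfl
    | symm _ _ _ ih => exact ih.symm
    | trans _ _ _ _ _ ih ih' => exact ih.trans ih'
  refine ⟨(f ⟨i, x₀⟩).1, fun x => hfst x ▸ (f ⟨i, x⟩).2, fun x => ?_,
    fun h => isEmptyElim x₀⟩
  ext <;> simp [hfst x]

theorem reversible_unionRel (hconn : ∀ i x y, Relation.EqvGen (R i) x y)
    (hemb : ∀ i j (φ : X i → X j), IsMono (R i) (R j) φ → ∀ x y, R j (φ x) (φ y) → R i x y)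
    (hwqo : WellQuasiOrdered fun i j => EmbedsIn (R i) (R j))
    (hfin : ∀ J : Set I, (∀ i ∈ J, ∀ j ∈ J, EmbedsIn (R i) (R j)) → J.Finite) :
    Reversible (unionRel R) := by
  intro f hf
  choose g φ hφ hempty using fun i => hf.2.exists_component (hconn i)
  have hmono : ∀ i, IsMono (R i) (R (g i)) (φ i) := fun i =>
    ⟨fun x y hxy => sigma_mk_injective (hf.1.1
      ((hφ i x).trans ((congrArg (Sigma.mk (g i)) hxy).trans (hφ i y).symm))),
      fun x y hxy => unionRel_mk_iff.1 (hφ i x ▸ hφ i y ▸ hf.2 _ _ (unionRel_mk_iff.2 hxy))⟩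
  have hsurj : Function.Surjective g := fun j => by
    rcases isEmpty_or_nonempty (X j) with hj | ⟨⟨y⟩⟩
    · exact ⟨j, hempty j hj⟩
    · obtain ⟨⟨i, x⟩, hx⟩ := hf.1.2 ⟨j, y⟩
      exact ⟨i, congrArg Sigma.fst ((hφ i x).symm.trans hx)⟩
  have hinj : Function.Injective g := by
    let _ : Preorder I :=
      { le := fun i j => EmbedsIn (R i) (R j)
        le_refl := fun i => .refl (R i)
        le_trans := fun _ _ _ => .trans }
    have : WellQuasiOrderedLE I := ⟨hwqo⟩
    exact injective_of_surjective_of_le hfin hsurj fun i => ⟨φ i, (hmono i).1, fun x y =>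
      ⟨(hmono i).2 x y, hemb _ _ _ (hmono i) x y⟩⟩
  refine ⟨hf.1, fun ⟨i, x⟩ ⟨j, y⟩ => ⟨hf.2 _ _, fun h => ?_⟩⟩
  rw [hφ i x, hφ j y] at h
  obtain rfl : i = j := hinj h.1
  exact unionRel_mk_iff.2 (hemb _ _ _ (hmono i) x y (unionRel_mk_iff.1 h))

theorem eqvGen_lt {L : Type*} [LinearOrder L] (x y : L) : Relation.EqvGen (· < ·) x y := by
  rcases lt_trichotomy x y with h | rfl | h
  · exact .rel _ _ h
  · exact .refl _
  · exact .symm _ _ (.rel _ _ h)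

end Reversibility

/-- **Proposition (Statement 16).** Let `X i`, `i ∈ I`, be pairwise disjoint (realized by a
sigma type) σ-scattered linear orders. If the sequence `⟨[X i]_⇄ : i ∈ I⟩` of
bi-embeddability classes is finite-to-one (there is no infinite `J ⊆ I` such that
`X i ⇄ X j` for all `i, j ∈ J`), then the disjoint union `⋃_{i∈I} X i` is a reversible
poset. -/
theorem stmt16 {I : Type u} {X : I → Type v} [∀ i, LinearOrder (X i)]
    (hss : ∀ i, SigmaScattered (X i) (· < ·))
    (hfto : ¬ ∃ J : Set I, J.Infinite ∧ ∀ i ∈ J, ∀ j ∈ J,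
      EmbedsIn ((· < ·) : X i → X i → Prop) ((· < ·) : X j → X j → Prop) ∧
      EmbedsIn ((· < ·) : X j → X j → Prop) ((· < ·) : X i → X i → Prop)) :
    Reversible (unionRel (fun i => ((· < ·) : X i → X i → Prop))) := by
  refine reversible_unionRel (fun _ => eqvGen_lt) (fun i j φ hφ x y hxy => ?_)
    (wellQuasiOrdered_embedsIn_of_sigmaScattered hss) fun J hJ => ?_
  · have hmono : StrictMono φ := hφ.2
    exact hmono.lt_iff_lt.1 hxy
  · by_contra hinf
    exact hfto ⟨J, hinf, fun i hi j hj => ⟨hJ i hi j hj, hJ j hj i hi⟩⟩
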